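/- (Relative Stallings' theorem.) Let φ : H → Out(A) be a monomorphism with H finite, let A = A_1 ∗ ⋯ ∗ A_n ∗ B be a free product decomposition with each A_i and B finitely generated, and suppose the decomposition is preserved by H. Let Ā be the preimage of φ(H) in Aut(A). Then Ā splits over a finite subgroup in such a way that each A_i is elliptic: there is a tree T on which Ā acts without inversions, with a single Ā-orbit of edges, with every edge stabilizer finite, with no vertex fixed by all of Ā, and such that for each i ≤ n the subgroup A_i (viewed inside Ā via A ≅ Inn(A)) fixes a vertex of T. -/

import Mathlib

/-! # Relative Stallings' theorem (Hensel–Kielak, Theorem 3 / `prop: relative splitting`) -/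

variable (A : Type*) [Group A]

/-- The subgroup of inner automorphisms of `A`, inside `MulAut A`. -/
abbrev Inn : Subgroup (MulAut A) := (MulAut.conj (G := A)).range

instance Inn_normal : (Inn A).Normal := by
  constructor
  rintro x ⟨a, rfl⟩ f
  exact ⟨f a, by ext x; simp [mul_assoc]⟩

/-- The outer automorphism group of `A`. -/
abbrev OutG := MulAut A ⧸ Inn A

/-- The canonical projection `Aut(A) → Out(A)`. -/
abbrev toOut : MulAut A →* OutG A := QuotientGroup.mk' (Inn A)


/-- A partially ordered set with an order-reversing involution in which any two elements are
nested and all intervals are finite, with an action of `G`; the oriented edges of a `G`-tree. -/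
structure TreeSet (G P : Type*) [Group G] [PartialOrder P] [MulAction G P] where
  star : P → P
  star_star : ∀ x, star (star x) = x
  star_le : ∀ {x y}, x ≤ y → star y ≤ star x
  nested : ∀ x y, x ≤ y ∨ x ≤ star y ∨ star x ≤ y ∨ star x ≤ star y
  not_le_star : ∀ {x y}, x ≤ y → ¬ x ≤ star y
  finite_Icc : ∀ x y : P, (Set.Icc x y).Finite
  smul_le : ∀ (g : G) {x y : P}, x ≤ y → g • x ≤ g • y
  smul_star : ∀ (g : G) (x : P), g • star x = star (g • x)

namespace TreeSet

variable {G P : Type*} [Group G] [PartialOrder P] [MulAction G P] (E : TreeSet G P)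

theorem smul_le_iff (E : TreeSet G P) (g : G) {x y : P} : g • x ≤ g • y ↔ x ≤ y :=
  ⟨fun h => by simpa using E.smul_le g⁻¹ h, E.smul_le g⟩

theorem star_inj {x y : P} : E.star x = E.star y ↔ x = y :=
  ⟨fun h => by rw [← E.star_star x, h, E.star_star], fun h => by rw [h]⟩

theorem smul_lt_iff (E : TreeSet G P) (g : G) {x y : P} : g • x < g • y ↔ x < y := by
  simp [lt_iff_le_not_ge, E.smul_le_iff]

theorem star_le_of_star_le {x y : P} (h : E.star x ≤ y) : E.star y ≤ x := by
  simpa [E.star_star] using E.star_le h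

theorem le_star_of_le_star {x y : P} (h : x ≤ E.star y) : y ≤ E.star x := by
  simpa [E.star_star] using E.star_le h

theorem not_star_le {x y : P} (h : x ≤ y) : ¬ E.star x ≤ y := fun h' =>
  E.not_le_star (E.star_le_of_star_le h') (E.star_le h)

/-- An orientation: a choice of one element from each pair `x, x*`, closed upwards. -/
structure IsOrientation (O : Set P) : Prop where
  star_mem : ∀ x, E.star x ∈ O ↔ x ∉ O
  mem_of_le : ∀ {x y}, x ∈ O → x ≤ y → y ∈ O

/-- The end vertex of the oriented edge `x`. -/
def vertex (x : P) : Set P := {y | x ≤ y ∨ E.star x < y}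

theorem mem_vertex {x y : P} : y ∈ E.vertex x ↔ x ≤ y ∨ E.star x < y := Iff.rfl

theorem self_mem_vertex (x : P) : x ∈ E.vertex x := Or.inl le_rfl

theorem isOrientation_vertex (x : P) : E.IsOrientation (E.vertex x) where
  star_mem y := by
    simp only [mem_vertex, not_or]
    constructor
    · rintro (h | h)
      · refine ⟨fun h' => E.not_le_star h' h, fun h' => ?_⟩
        exact h'.not_ge (E.le_star_of_le_star h)
      · refine ⟨fun h' => ?_, fun h' => E.not_le_star h'.le h.le⟩
        exact h.not_ge (E.star_le h')
    · rintro ⟨h1, h2⟩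
      rcases E.nested x y with h | h | h | h
      · exact absurd h h1
      · exact Or.inl h
      · have : E.star x = y := by
          by_contra hne
          exact h2 (lt_of_le_of_ne h hne)
        left
        rw [← this, E.star_star]
      · by_cases hne : E.star x = E.star y
        · rw [E.star_inj] at hne
          exact absurd hne.le h1
        · exact Or.inr (lt_of_le_of_ne h hne)
  mem_of_le {y z} h hyz := h.imp (fun h => h.trans hyz) (fun h => h.trans_le hyz)

theorem IsOrientation.eq_of_subset {E : TreeSet G P} {O O' : Set P} (h : E.IsOrientation O)
    (h' : E.IsOrientation O') (hs : O ⊆ O') : O = O' := by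
  refine hs.antisymm fun x hx => ?_
  by_contra hxO
  exact (h'.star_mem x).1 (hs ((h.star_mem x).2 hxO)) hx

theorem IsOrientation.eq_vertex {E : TreeSet G P} {O : Set P} (h : E.IsOrientation O) {x : P}
    (hx : x ∈ O) (hmin : ∀ y ∈ O, y ≤ x → y = x) : O = E.vertex x := by
  refine h.eq_of_subset (E.isOrientation_vertex x) fun y hy => ?_
  rcases E.nested x y with h1 | h1 | h1 | h1
  · exact Or.inl h1
  · exact absurd hy ((h.star_mem y).1 (h.mem_of_le hx h1))
  · refine Or.inr (lt_of_le_of_ne h1 ?_)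
    rintro rfl
    exact (h.star_mem x).1 hy hx
  · have : y ≤ x := by simpa [E.star_star] using E.star_le h1
    exact Or.inl (hmin y hy this).ge

theorem vertex_star_of_covers {x y : P} (hxy : x < y) (hc : ∀ z, x < z → z ≤ y → z = y) :
    E.vertex (E.star x) = E.vertex y := by
  refine (E.isOrientation_vertex _).eq_vertex (Or.inr (by rwa [E.star_star])) ?_
  rintro z (hz | hz) hzy
  · exact absurd hzy fun h => E.not_star_le (hxy.le) (hz.trans h)
  · rw [E.star_star] at hz
    exact hc z hz hzy

theorem star_notMem_vertex (x : P) : E.star x ∉ E.vertex x :=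
  fun h => (E.isOrientation_vertex x).star_mem x |>.1 h (E.self_mem_vertex x)

theorem mem_vertex_star {x y : P} (h1 : y ≠ x) (h2 : y ≠ E.star x) :
    y ∈ E.vertex (E.star x) ↔ y ∈ E.vertex x := by
  simp only [mem_vertex, E.star_star]
  constructor
  · rintro (h | h)
    · exact Or.inr (lt_of_le_of_ne h h2.symm)
    · exact Or.inl h.le
  · rintro (h | h)
    · exact Or.inr (lt_of_le_of_ne h h1.symm)
    · exact Or.inl h.le

/-- The tree whose oriented edges are the elements of `P`. -/
def tree : SimpleGraph (Set.range E.vertex) where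
  Adj u v := ∃ x, u.1 = E.vertex x ∧ v.1 = E.vertex (E.star x)
  symm := ⟨by
    rintro u v ⟨x, h1, h2⟩
    exact ⟨E.star x, h2, by rw [E.star_star, h1]⟩⟩
  loopless := ⟨by
    rintro u ⟨x, h1, h2⟩
    apply E.star_notMem_vertex x
    rw [← h1, h2]
    exact E.self_mem_vertex _⟩

/-- The end vertex of `x`, as a vertex of the tree. -/
def vert (x : P) : Set.range E.vertex := ⟨E.vertex x, x, rfl⟩

theorem tree_adj_vert (x : P) : E.tree.Adj (E.vert x) (E.vert (E.star x)) := ⟨x, rfl, rfl⟩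

theorem exists_covers (E : TreeSet G P) {x y : P} (hxy : x < y) :
    ∃ z, x < z ∧ z ≤ y ∧ ∀ w, x < w → w ≤ z → w = z := by
  have hfin : (Set.Ioc x y).Finite := (E.finite_Icc x y).subset Set.Ioc_subset_Icc_self
  obtain ⟨z, hz⟩ := hfin.exists_minimal ⟨y, hxy, le_rfl⟩
  exact ⟨z, hz.1.1, hz.1.2, fun w hw hwz => hwz.antisymm (hz.2 ⟨hw, hwz.trans hz.1.2⟩ hwz)⟩

theorem reachable_of_le : ∀ (n : ℕ) {x y : P}, (Set.Icc x y).ncard ≤ n → x ≤ y →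
    E.tree.Reachable (E.vert x) (E.vert y)
  | 0, x, y, hn, hxy => by
    rw [Nat.le_zero, Set.ncard_eq_zero (E.finite_Icc x y)] at hn
    exact absurd hn (Set.nonempty_Icc.2 hxy).ne_empty
  | n + 1, x, y, hn, hxy => by
    rcases hxy.eq_or_lt with rfl | hlt
    · rfl
    obtain ⟨z, hxz, hzy, hc⟩ := E.exists_covers hlt
    have h1 : E.tree.Reachable (E.vert x) (E.vert z) := by
      have h2 : E.vert (E.star x) = E.vert z := Subtype.ext (E.vertex_star_of_covers hxz hc)
      exact h2 ▸ (E.tree_adj_vert x).reachable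
    refine h1.trans (reachable_of_le n ?_ hzy)
    have : (Set.Icc z y).ncard < (Set.Icc x y).ncard := by
      refine Set.ncard_lt_ncard ⟨Set.Icc_subset_Icc_left hxz.le, fun h => ?_⟩ (E.finite_Icc x y)
      exact hxz.not_ge (h ⟨le_rfl, hxy⟩).1
    omega

theorem isTree_tree [Nonempty P] : E.tree.IsTree where
  connected := by
    have : Nonempty (Set.range E.vertex) := ⟨E.vert (Classical.arbitrary P)⟩
    refine ⟨?_⟩
    rintro ⟨_, x, rfl⟩ ⟨_, y, rfl⟩
    change E.tree.Reachable (E.vert x) (E.vert y)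
    have hx := (E.tree_adj_vert x).reachable
    have hy := (E.tree_adj_vert y).reachable
    rcases E.nested x y with h | h | h | h
    · exact E.reachable_of_le _ le_rfl h
    · exact (E.reachable_of_le _ le_rfl h).trans hy.symm
    · exact hx.trans (E.reachable_of_le _ le_rfl h)
    · exact hx.trans ((E.reachable_of_le _ le_rfl h).trans hy.symm)
  isAcyclic := by
    rw [SimpleGraph.isAcyclic_iff_forall_adj_isBridge]
    rintro u v ⟨x, hu, hv⟩
    rw [SimpleGraph.isBridge_iff]
    have key : ∀ w : Set.range E.vertex, (E.tree \ SimpleGraph.fromEdgeSet {s(u, v)}).Reachable u w →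
        x ∈ w.1 := by
      rintro w ⟨p⟩
      have : ∀ a b (q : (E.tree \ SimpleGraph.fromEdgeSet {s(u, v)}).Walk a b), x ∈ a.1 → x ∈ b.1 := by
        intro a b q
        induction q with
        | nil => exact id
        | cons hadj q ih =>
          rename_i a b c
          intro ha
          apply ih
          obtain ⟨⟨y, h1, h2⟩, hne⟩ := hadj
          have hne' : ¬ s(a, b) = s(u, v) := by
            intro h
            apply hne
            rw [SimpleGraph.fromEdgeSet_adj]
            refine ⟨h, ?_⟩
            rintro rfl
            exact E.tree.loopless.irrefl _ ⟨y, h1, h2⟩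
          rw [h1] at ha
          rw [h2]
          refine (E.mem_vertex_star ?_ ?_).2 ha
          · rintro rfl
            apply hne'
            rw [Subtype.ext (h1.trans hu.symm), Subtype.ext (h2.trans hv.symm)]
          · rintro rfl
            exact E.star_notMem_vertex y ha
      refine this _ _ p ?_
      rw [hu]
      exact E.self_mem_vertex x
    intro h
    have h1 := key v h
    rw [hv] at h1
    have := E.star_notMem_vertex (E.star x)
    rw [E.star_star] at this
    exact this h1

open scoped Pointwise in
theorem smul_vertex (g : G) (x : P) : g • E.vertex x = E.vertex (g • x) := by
  ext y
  rw [Set.mem_smul_set_iff_inv_smul_mem, mem_vertex, mem_vertex, ← E.smul_le_iff g,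
    ← E.smul_lt_iff g, E.smul_star, smul_inv_smul]

open scoped Pointwise in
/-- The action on the vertices of the tree. -/
def treeAction : G →* Equiv.Perm (Set.range E.vertex) :=
  letI : MulAction G (Set.range E.vertex) :=
    { smul := fun g u => ⟨g • u.1, by
        obtain ⟨_, x, rfl⟩ := u
        exact ⟨g • x, (E.smul_vertex g x).symm⟩⟩
      one_smul := fun u => Subtype.ext (one_smul G u.1)
      mul_smul := fun g h u => Subtype.ext (mul_smul g h u.1) }
  MulAction.toPermHom G _

open scoped Pointwise in
theorem coe_treeAction (g : G) (u : Set.range E.vertex) :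
    (E.treeAction g u : Set P) = g • (u : Set P) := rfl

theorem treeAction_vert (g : G) (x : P) : E.treeAction g (E.vert x) = E.vert (g • x) :=
  Subtype.ext (E.smul_vertex g x)

theorem exists_eq_vert_of_adj {u v : Set.range E.vertex} (h : E.tree.Adj u v) :
    ∃ x, u = E.vert x ∧ v = E.vert (E.star x) := by
  obtain ⟨x, h1, h2⟩ := h
  exact ⟨x, Subtype.ext h1, Subtype.ext h2⟩

theorem eq_of_vert_eq {x y : P} (h1 : E.vert x = E.vert y)
    (h2 : E.vert (E.star x) = E.vert (E.star y)) : x = y := by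
  by_contra hne
  have h1' : E.vertex x = E.vertex y := congrArg Subtype.val h1
  have h2' : E.vertex (E.star x) = E.vertex (E.star y) := congrArg Subtype.val h2
  have hx : x ∈ E.vertex y := h1' ▸ E.self_mem_vertex x
  have hxs : x ≠ E.star y := by
    rintro rfl
    exact E.star_notMem_vertex y hx
  have := (E.mem_vertex_star hne hxs).2 hx
  rw [← h2'] at this
  have h3 := E.star_notMem_vertex (E.star x)
  rw [E.star_star] at h3
  exact h3 this

theorem treeAction_adj (g : G) (u v : Set.range E.vertex) :
    E.tree.Adj (E.treeAction g u) (E.treeAction g v) ↔ E.tree.Adj u v := by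
  have key : ∀ (g : G) (u v : Set.range E.vertex), E.tree.Adj u v →
      E.tree.Adj (E.treeAction g u) (E.treeAction g v) := by
    intro g u v h
    obtain ⟨x, rfl, rfl⟩ := E.exists_eq_vert_of_adj h
    rw [treeAction_vert, treeAction_vert, E.smul_star]
    exact E.tree_adj_vert _
  refine ⟨fun h => ?_, key g u v⟩
  have := key g⁻¹ _ _ h
  rwa [← Equiv.Perm.mul_apply, ← Equiv.Perm.mul_apply, ← map_mul, inv_mul_cancel, map_one] at this

open scoped Pointwise in
/-- A tree set with one orbit of edges, no inversions, finite stabilisers and enough translations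
gives a splitting over a finite group, in which the stabiliser of every invariant orientation with
a minimal element is elliptic. -/
theorem exists_splitting [Countable P] [Nonempty P]
    (hinv : ∀ (g : G) (x : P), g • x ≠ E.star x)
    (horb : ∀ x y : P, ∃ g : G, g • x = y ∨ g • x = E.star y)
    (hstab : ∀ x : P, {g : G | g • x = x}.Finite)
    (htrans : ∀ x : P, ∃ g : G, x < g • x ∨ x < E.star (g • x)) :
    ∃ (W : Type) (T : SimpleGraph W) (ρ : G →* Equiv.Perm W),
      T.IsTree ∧
      (∀ (g : G) (u v : W), T.Adj (ρ g u) (ρ g v) ↔ T.Adj u v) ∧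
      (∀ (g : G) (u v : W), T.Adj u v → ¬(ρ g u = v ∧ ρ g v = u)) ∧
      (∀ u v x y : W, T.Adj u v → T.Adj x y →
        ∃ g : G, (ρ g u = x ∧ ρ g v = y) ∨ (ρ g u = y ∧ ρ g v = x)) ∧
      (∀ u v : W, T.Adj u v → {g : G | ρ g u = u ∧ ρ g v = v}.Finite) ∧
      (¬ ∃ w : W, ∀ g : G, ρ g w = w) ∧
      (∀ (S : Set G) (O : Set P), E.IsOrientation O → (∀ g ∈ S, ∀ y, g • y ∈ O ↔ y ∈ O) →
        (∃ x ∈ O, ∀ y ∈ O, y ≤ x → y = x) → ∃ w : W, ∀ g ∈ S, ρ g w = w) := by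
  have : Countable (Set.range E.vertex) := Set.countable_range _
  let e : Set.range E.vertex ≃ Shrink.{0} (Set.range E.vertex) := equivShrink _
  let ρ : G →* Equiv.Perm (Shrink.{0} (Set.range E.vertex)) :=
    e.permCongrHom.toMonoidHom.comp E.treeAction
  have hρ : ∀ g w, ρ g w = e (E.treeAction g (e.symm w)) := fun g w => rfl
  have hT : ∀ u v, (E.tree.map e.toEmbedding).Adj u v ↔ E.tree.Adj (e.symm u) (e.symm v) := by
    intro u v
    obtain ⟨u, rfl⟩ := e.surjective u
    obtain ⟨v, rfl⟩ := e.surjective v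
    simpa using SimpleGraph.map_adj_apply (G := E.tree) (f := e.toEmbedding) (a := u) (b := v)
  refine ⟨_, E.tree.map e.toEmbedding, ρ, ?_, ?_, ?_, ?_, ?_, ?_, ?_⟩
  · exact (SimpleGraph.Iso.map e E.tree).isTree_iff.1 E.isTree_tree
  · intro g u v
    simp only [hT, hρ, Equiv.symm_apply_apply, E.treeAction_adj]
  · rintro g u v huv ⟨h1, h2⟩
    rw [hT] at huv
    obtain ⟨x, hu, hv⟩ := E.exists_eq_vert_of_adj huv
    rw [hρ, ← Equiv.eq_symm_apply, hu, hv, treeAction_vert] at h1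
    rw [hρ, ← Equiv.eq_symm_apply, hu, hv, treeAction_vert, E.smul_star] at h2
    refine hinv g x (E.eq_of_vert_eq h1 ?_)
    rw [h2, E.star_star]
  · intro u v x y huv hxy
    rw [hT] at huv hxy
    obtain ⟨a, hu, hv⟩ := E.exists_eq_vert_of_adj huv
    obtain ⟨b, hx, hy⟩ := E.exists_eq_vert_of_adj hxy
    obtain ⟨g, hg⟩ := horb a b
    refine ⟨g, ?_⟩
    simp only [hρ, ← Equiv.eq_symm_apply, hu, hv, hx, hy, treeAction_vert, E.smul_star]
    rcases hg with hg | hg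
    · left; simp [hg]
    · right; simp [hg, E.star_star]
  · intro u v huv
    rw [hT] at huv
    obtain ⟨a, hu, hv⟩ := E.exists_eq_vert_of_adj huv
    refine (hstab a).subset ?_
    rintro g ⟨h1, h2⟩
    simp only [hρ, ← Equiv.eq_symm_apply, hu, hv, treeAction_vert, E.smul_star] at h1 h2
    exact E.eq_of_vert_eq h1 h2
  · rintro ⟨w, hw⟩
    obtain ⟨x, hx⟩ : ∃ x, e.symm w = E.vert x := by
      obtain ⟨x, hx⟩ := (e.symm w).2
      exact ⟨x, Subtype.ext hx.symm⟩
    have hfix : ∀ g : G, E.vertex (g • x) = E.vertex x := by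
      intro g
      have := hw g
      rw [hρ, ← Equiv.eq_symm_apply, hx, treeAction_vert] at this
      exact congrArg Subtype.val this
    have hmem : ∀ g : G, g • x ∈ E.vertex x := fun g => hfix g ▸ E.self_mem_vertex _
    obtain ⟨g, hg | hg⟩ := htrans x
    · have h1 : g⁻¹ • x < x := by
        rw [← E.smul_lt_iff g]; simpa using hg
      rcases hmem g⁻¹ with h | h
      · exact h1.not_ge h
      · exact E.not_star_le le_rfl (h.trans h1).le
    · rcases hmem g with h | h
      · exact E.not_le_star h hg.le
      · have := E.le_star_of_le_star hg.le
        exact h.not_ge this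
  · rintro S O hO hS ⟨x, hx, hmin⟩
    refine ⟨e (E.vert x), fun g hg => ?_⟩
    rw [hρ, Equiv.symm_apply_apply]
    congr 1
    apply Subtype.ext
    rw [coe_treeAction]
    change _ • E.vertex x = E.vertex x
    rw [← hO.eq_vertex hx hmin]
    ext y
    rw [Set.mem_smul_set_iff_inv_smul_mem, ← hS g hg, smul_inv_smul]

end TreeSet

namespace SimpleGraph

variable {V : Type*}

/-- The edges of `X` leaving `C`, as ordered pairs. -/
def outBoundary (X : SimpleGraph V) (C : Set V) : Set (V × V) :=
  {p | X.Adj p.1 p.2 ∧ p.1 ∈ C ∧ p.2 ∉ C}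

/-- `C` induces a connected (or empty) subgraph of `X`. -/
def ConnectedOn (X : SimpleGraph V) (C : Set V) : Prop :=
  ∀ D ⊆ C, D.Nonempty → (∀ u ∈ D, ∀ v ∈ C, X.Adj u v → v ∈ D) → D = C

theorem outBoundary_compl (X : SimpleGraph V) (C : Set V) :
    X.outBoundary Cᶜ = Prod.swap '' X.outBoundary C := by
  ext ⟨u, v⟩
  simp [outBoundary, X.adj_comm, and_comm]

theorem ConnectedOn.deleteEdges {X : SimpleGraph V} {C : Set V} (h : X.ConnectedOn C) {u v : V}
    (huv : u ∈ C → v ∉ C) : (X.deleteEdges {s(u, v)}).ConnectedOn C := by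
  intro D hD hne hcl
  refine h D hD hne fun a ha b hb hab => hcl a ha b hb ?_
  rw [deleteEdges_adj]
  refine ⟨hab, fun heq => ?_⟩
  rw [Set.mem_singleton_iff, Sym2.eq_iff] at heq
  rcases heq with ⟨rfl, rfl⟩ | ⟨rfl, rfl⟩
  · exact huv (hD ha) hb
  · exact huv hb (hD ha)

theorem exists_mem_outBoundary_of_reachable {X : SimpleGraph V} {C : Set V} {x y : V}
    (p : X.Walk x y) (hx : x ∈ C) (hy : y ∉ C) :
    ∃ d ∈ p.darts, (d.fst, d.snd) ∈ X.outBoundary C := by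
  obtain ⟨d, hd, h1, h2⟩ := p.exists_boundary_dart C hx hy
  exact ⟨d, hd, d.adj, h1, h2⟩

/-- Only finitely many bonds with at most `k` edges separate two given vertices. -/
theorem finite_setOf_bond_separating (k : ℕ) : ∀ (X : SimpleGraph V) (x y : V),
    {C : Set V | x ∈ C ∧ y ∉ C ∧ X.ConnectedOn C ∧ X.ConnectedOn Cᶜ ∧
      (X.outBoundary C).Finite ∧ (X.outBoundary C).ncard ≤ k}.Finite := by
  induction k with
  | zero =>
    intro X x y
    by_cases hr : X.Reachable x y
    · obtain ⟨p⟩ := hr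
      convert Set.finite_empty
      ext C
      simp only [Set.mem_ofPred_eq, Set.mem_empty_iff_false, iff_false]
      rintro ⟨hx, hy, -, -, hf, hk⟩
      obtain ⟨d, -, hd⟩ := exists_mem_outBoundary_of_reachable p hx hy
      rw [Nat.le_zero, Set.ncard_eq_zero hf] at hk
      exact (hk ▸ hd : _ ∈ (∅ : Set (V × V)))
    · exact (Set.finite_singleton {v | X.Reachable x v}).subset (bond_subset_of_not_reachable hr 0)
  | succ k ih =>
    intro X x y
    by_cases hr : X.Reachable x y
    · obtain ⟨p⟩ := hr
      refine Set.Finite.subset (Set.Finite.biUnion (List.finite_toSet p.darts)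
        (fun d _ => ih (X.deleteEdges {s(d.fst, d.snd)}) d.fst d.snd)) ?_
      rintro C ⟨hx, hy, hc, hc', hf, hk⟩
      obtain ⟨d, hd, hdC⟩ := exists_mem_outBoundary_of_reachable p hx hy
      have hlt : (X.deleteEdges {s(d.fst, d.snd)}).outBoundary C ⊂ X.outBoundary C := by
        refine ⟨fun q hq => ⟨(deleteEdges_adj.1 hq.1).1, hq.2⟩, fun h => ?_⟩
        have := (h hdC).1
        rw [deleteEdges_adj] at this
        exact this.2 rfl
      refine Set.mem_biUnion hd ⟨hdC.2.1, hdC.2.2, hc.deleteEdges fun _ => hdC.2.2,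
        hc'.deleteEdges fun h => absurd hdC.2.1 h, hf.subset hlt.subset, ?_⟩
      have := Set.ncard_lt_ncard hlt hf
      omega
    · exact (Set.finite_singleton {v | X.Reachable x v}).subset
        (bond_subset_of_not_reachable hr (k + 1))
where
  bond_subset_of_not_reachable {X : SimpleGraph V} {x y : V} (hr : ¬ X.Reachable x y) (k : ℕ) :
      {C : Set V | x ∈ C ∧ y ∉ C ∧ X.ConnectedOn C ∧ X.ConnectedOn Cᶜ ∧
        (X.outBoundary C).Finite ∧ (X.outBoundary C).ncard ≤ k} ⊆ {{v | X.Reachable x v}} := by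
    rintro C ⟨hx, hy, hc, hc', -, -⟩
    have h1 := hc (C ∩ {v | X.Reachable x v}) Set.inter_subset_left ⟨x, hx, Reachable.refl x⟩
      (fun u hu v hv huv => ⟨hv, hu.2.trans huv.reachable⟩)
    have h2 := hc' (Cᶜ ∩ {v | X.Reachable y v}) Set.inter_subset_left ⟨y, hy, Reachable.refl y⟩
      (fun u hu v hv huv => ⟨hv, hu.2.trans huv.reachable⟩)
    rw [Set.mem_singleton_iff]
    refine (Set.inter_eq_left.1 h1).antisymm fun v hv => ?_
    by_contra hvC
    exact hr (hv.trans (Set.inter_eq_left.1 h2 hvC).symm)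

theorem ncard_outBoundary_compl (X : SimpleGraph V) (C : Set V) :
    (X.outBoundary Cᶜ).ncard = (X.outBoundary C).ncard := by
  rw [outBoundary_compl, Set.ncard_image_of_injective _ Prod.swap_injective]

theorem finite_outBoundary_compl {X : SimpleGraph V} {C : Set V} (h : (X.outBoundary C).Finite) :
    (X.outBoundary Cᶜ).Finite := by
  rw [outBoundary_compl]
  exact h.image _

theorem outBoundary_inter_union_union_subset (X : SimpleGraph V) (C D : Set V) :
    X.outBoundary (C ∩ D) ∪ X.outBoundary (C ∪ D) ⊆ X.outBoundary C ∪ X.outBoundary D := by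
  rintro p (⟨h, h1, h2⟩ | ⟨h, h1, h2⟩) <;>
  simp only [outBoundary, Set.mem_union, Set.mem_inter_iff, Set.mem_ofPred_eq] at * <;> tauto

theorem outBoundary_inter_inter_union_subset (X : SimpleGraph V) (C D : Set V) :
    X.outBoundary (C ∩ D) ∩ X.outBoundary (C ∪ D) ⊆ X.outBoundary C ∩ X.outBoundary D := by
  rintro p ⟨⟨h, h1, h2⟩, ⟨h', h1', h2'⟩⟩
  simp only [outBoundary, Set.mem_union, Set.mem_inter_iff, Set.mem_ofPred_eq] at *
  tauto

theorem ncard_outBoundary_inter_add_union_le {X : SimpleGraph V} {C D : Set V}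
    (hC : (X.outBoundary C).Finite) (hD : (X.outBoundary D).Finite) :
    (X.outBoundary (C ∩ D)).ncard + (X.outBoundary (C ∪ D)).ncard ≤
      (X.outBoundary C).ncard + (X.outBoundary D).ncard := by
  have hf := (hC.union hD).subset (X.outBoundary_inter_union_union_subset C D)
  rw [← Set.ncard_union_add_ncard_inter _ _ (hf.subset Set.subset_union_left)
    (hf.subset Set.subset_union_right), ← Set.ncard_union_add_ncard_inter _ _ hC hD]
  exact add_le_add (Set.ncard_le_ncard (X.outBoundary_inter_union_union_subset C D) (hC.union hD))
    (Set.ncard_le_ncard (X.outBoundary_inter_inter_union_subset C D) (hC.inter_of_left _))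

end SimpleGraph

/-- Two subsets are nested if one of them or its complement is contained in the other or its
complement. -/
def Set.Nested {V : Type*} (C D : Set V) : Prop := C ⊆ D ∨ C ⊆ Dᶜ ∨ Cᶜ ⊆ D ∨ Cᶜ ⊆ Dᶜ

namespace Set.Nested

variable {V : Type*} {C D E : Set V}

theorem symm (h : C.Nested D) : D.Nested C := by
  rcases h with h | h | h | h
  · exact .inr (.inr (.inr (Set.compl_subset_compl.2 h)))
  · exact .inr (.inl (Set.subset_compl_comm.1 h))
  · exact .inr (.inr (.inl (Set.compl_subset_comm.1 h)))
  · exact .inl (Set.compl_subset_compl.1 h)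

theorem compl_right_iff : C.Nested Dᶜ ↔ C.Nested D := by
  simp only [Set.Nested, compl_compl]
  tauto

theorem compl_left_iff : Cᶜ.Nested D ↔ C.Nested D := by
  simp only [Set.Nested, compl_compl]
  tauto

theorem inter_or_union (h : C.Nested E) : (C ∩ D).Nested E ∨ (C ∪ D).Nested E := by
  rcases h with h | h | h | h
  · exact .inl (.inl (Set.inter_subset_left.trans h))
  · exact .inl (.inr (.inl (Set.inter_subset_left.trans h)))
  · exact .inr (.inr (.inr (.inl
      ((Set.compl_subset_compl.2 Set.subset_union_left).trans h))))
  · exact .inr (.inr (.inr (.inr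
      ((Set.compl_subset_compl.2 Set.subset_union_left).trans h))))

theorem inter (h : C.Nested E) (h' : D.Nested E) (hCD : ¬ C.Nested D) : (C ∩ D).Nested E := by
  rcases h with h | h | h | h
  · exact .inl (Set.inter_subset_left.trans h)
  · exact .inr (.inl (Set.inter_subset_left.trans h))
  all_goals rcases h' with h' | h' | h' | h'
  · exact .inl (Set.inter_subset_right.trans h')
  · exact .inr (.inl (Set.inter_subset_right.trans h'))
  · refine .inr (.inr (.inl ?_))
    rw [Set.compl_inter]
    exact Set.union_subset h h'
  · exact absurd (.inr (.inr (.inl (h.trans (Set.compl_subset_compl.1 h'))))) hCD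
  · exact .inl (Set.inter_subset_right.trans h')
  · exact .inr (.inl (Set.inter_subset_right.trans h'))
  · exact absurd (.inr (.inr (.inl (h.trans (Set.compl_subset_comm.1 h'))))) hCD
  · refine .inr (.inr (.inr ?_))
    rw [Set.compl_inter]
    exact Set.union_subset h h'

theorem union (h : C.Nested E) (h' : D.Nested E) (hCD : ¬ C.Nested D) : (C ∪ D).Nested E := by
  rw [← compl_left_iff, Set.compl_union]
  exact (compl_left_iff.2 h).inter (compl_left_iff.2 h')
    (by rwa [compl_left_iff, compl_right_iff])

end Set.Nested

namespace SimpleGraph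

open scoped Pointwise

variable {V : Type*} (G : Type*) [Group G] [MulAction G V] (X : SimpleGraph V) (o : V)

/-- `C` contains infinitely many translates of `o`. -/
def Essential (C : Set V) : Prop := {g : G | g • o ∈ C}.Infinite

/-- A set with finite boundary which is essential and has an essential complement. -/
structure IsCut (C : Set V) : Prop where
  finite : (X.outBoundary C).Finite
  essential : Essential G o C
  essential_compl : Essential G o Cᶜ

/-- A cut with the least possible number of edges. -/
structure IsMinCut (C : Set V) : Prop extends IsCut G X o C where
  ncard_le : ∀ D, IsCut G X o D → (X.outBoundary C).ncard ≤ (X.outBoundary D).ncard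

variable {G X o} {C D E : Set V}

theorem Essential.mono (h : Essential G o C) (hCD : C ⊆ D) : Essential G o D :=
  Set.Infinite.mono (fun _ hg => hCD hg) h

theorem Essential.or_of_subset_union (h : Essential G o C) (hC : C ⊆ D ∪ E) :
    Essential G o D ∨ Essential G o E := by
  by_contra! hn
  rw [Essential, Essential, Set.not_infinite, Set.not_infinite] at hn
  exact h ((hn.1.union hn.2).subset fun g hg => hC hg)

theorem Essential.nonempty (h : Essential G o C) : C.Nonempty :=
  let ⟨_, hg⟩ := Set.Infinite.nonempty h
  ⟨_, hg⟩

theorem Essential.smul (h : Essential G o C) (g : G) : Essential G o (g • C) := by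
  refine (h.image (mul_right_injective g).injOn).mono ?_
  rintro _ ⟨k, hk, rfl⟩
  change (g * k) • o ∈ g • C
  rw [mul_smul]
  exact Set.smul_mem_smul_set hk

theorem IsCut.compl (h : IsCut G X o C) : IsCut G X o Cᶜ :=
  ⟨finite_outBoundary_compl h.finite, h.essential_compl, by rw [compl_compl]; exact h.essential⟩

theorem IsMinCut.compl (h : IsMinCut G X o C) : IsMinCut G X o Cᶜ :=
  ⟨h.toIsCut.compl, by rw [ncard_outBoundary_compl]; exact h.ncard_le⟩

theorem exists_isMinCut (h : IsCut G X o C) : ∃ D, IsMinCut G X o D := by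
  obtain ⟨D, hD, hmin⟩ := (measure fun C => (X.outBoundary C).ncard).wf.has_min
    {C | IsCut G X o C} ⟨C, h⟩
  exact ⟨D, hD, fun E hE => not_lt.1 (hmin E hE)⟩

theorem outBoundary_smul (hX : ∀ (g : G) u v, X.Adj (g • u) (g • v) ↔ X.Adj u v) (g : G)
    (C : Set V) : X.outBoundary (g • C) = g • X.outBoundary C := by
  ext ⟨u, v⟩
  rw [Set.mem_smul_set_iff_inv_smul_mem]
  simp only [outBoundary, Set.mem_ofPred_eq, Set.mem_smul_set_iff_inv_smul_mem, Prod.smul_mk, hX]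

theorem IsCut.smul (hX : ∀ (g : G) u v, X.Adj (g • u) (g • v) ↔ X.Adj u v) (g : G)
    (h : IsCut G X o C) : IsCut G X o (g • C) where
  finite := by
    rw [outBoundary_smul hX]
    exact h.finite.smul_set
  essential := h.essential.smul g
  essential_compl := by
    rw [← Set.smul_set_compl]
    exact h.essential_compl.smul g

theorem IsMinCut.smul (hX : ∀ (g : G) u v, X.Adj (g • u) (g • v) ↔ X.Adj u v) (g : G)
    (h : IsMinCut G X o C) : IsMinCut G X o (g • C) := by
  refine ⟨h.toIsCut.smul hX g, ?_⟩
  rw [outBoundary_smul hX, Set.ncard_smul_set]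
  exact h.ncard_le

theorem outBoundary_nonempty (hconn : X.Connected) (hC : C.Nonempty) (hC' : Cᶜ.Nonempty) :
    (X.outBoundary C).Nonempty := by
  obtain ⟨x, hx⟩ := hC
  obtain ⟨y, hy⟩ := hC'
  obtain ⟨p⟩ := hconn.preconnected x y
  obtain ⟨d, -, hd⟩ := exists_mem_outBoundary_of_reachable p hx hy
  exact ⟨_, hd⟩

theorem IsMinCut.eq_of_outBoundary_subset (hconn : X.Connected) (h : IsMinCut G X o C)
    (hD : D ⊆ C) (hess : Essential G o D) (hsub : ∀ u ∈ D, ∀ v ∈ C, X.Adj u v → v ∈ D) :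
    D = C := by
  by_contra hne
  have hb : X.outBoundary D ⊆ X.outBoundary C := fun p hp =>
    ⟨hp.1, hD hp.2.1, fun hC => hp.2.2 (hsub _ hp.2.1 _ hC hp.1)⟩
  have hDcut : IsCut G X o D :=
    ⟨h.finite.subset hb, hess, h.essential_compl.mono (Set.compl_subset_compl.2 hD)⟩
  have heq := Set.eq_of_subset_of_ncard_le hb (h.ncard_le D hDcut) h.finite
  have hne' : (C \ D).Nonempty := by
    rw [Set.nonempty_iff_ne_empty, Ne, Set.sdiff_eq_empty]
    exact fun h' => hne (hD.antisymm h')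
  obtain ⟨p, hp, hp1, hp2⟩ := outBoundary_nonempty hconn hne'
    (hess.nonempty.mono fun x hx hx' => hx'.2 hx)
  by_cases hpC : p.2 ∈ C
  · have hpD : p.2 ∈ D := by
      by_contra hpD
      exact hp2 ⟨hpC, hpD⟩
    exact hp1.2 (hsub _ hpD _ hp1.1 hp.symm)
  · have : p ∈ X.outBoundary D := heq ▸ ⟨hp, hp1.1, hpC⟩
    exact hp1.2 this.2.1

theorem IsMinCut.connectedOn (hconn : X.Connected) (h : IsMinCut G X o C) : X.ConnectedOn C := by
  intro D hD hne hsub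
  by_cases hess : Essential G o D
  · exact h.eq_of_outBoundary_subset hconn hD hess hsub
  · have hess' : Essential G o (C \ D) :=
      (h.essential.or_of_subset_union (D := D) (E := C \ D) (by simp)).resolve_left hess
    have := h.eq_of_outBoundary_subset hconn Set.sdiff_subset hess' fun u hu v hv huv =>
      ⟨hv, fun hvD => hu.2 (hsub v hvD u hu.1 huv.symm)⟩
    obtain ⟨x, hx⟩ := hne
    exact absurd hx (this.symm ▸ hD hx : x ∈ C \ D).2

theorem finite_setOf_isMinCut_separating (hconn : X.Connected) (x y : V) :
    {C | IsMinCut G X o C ∧ x ∈ C ∧ y ∉ C}.Finite := by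
  by_cases hne : ∃ C, IsMinCut G X o C
  · obtain ⟨C₀, hC₀⟩ := hne
    refine (finite_setOf_bond_separating (X.outBoundary C₀).ncard X x y).subset ?_
    rintro C ⟨hC, hx, hy⟩
    exact ⟨hx, hy, hC.connectedOn hconn, hC.compl.connectedOn hconn, hC.finite,
      hC.ncard_le _ hC₀.toIsCut⟩
  · refine Set.finite_empty.subset ?_
    rintro C ⟨hC, -⟩
    exact hne ⟨C, hC⟩

theorem ConnectedOn.subset_or_subset_compl (hC : X.ConnectedOn C)
    (h : ∀ p ∈ X.outBoundary D, p.1 ∉ C) : C ⊆ D ∨ C ⊆ Dᶜ := by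
  by_cases hne : (C ∩ D).Nonempty
  · left
    rw [← Set.inter_eq_left]
    refine hC _ Set.inter_subset_left hne fun u hu v hv huv => ⟨hv, ?_⟩
    by_contra hvD
    exact h (u, v) ⟨huv, hu.2, hvD⟩ hu.1
  · right
    rw [Set.subset_compl_iff_disjoint_right, Set.disjoint_iff_inter_eq_empty]
    exact Set.not_nonempty_iff_eq_empty.1 hne

/-- Only finitely many minimal cuts cross a given set with finite boundary. -/
theorem finite_setOf_isMinCut_not_nested (hconn : X.Connected) (hC : (X.outBoundary C).Finite) :
    {E | IsMinCut G X o E ∧ ¬ C.Nested E}.Finite := by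
  refine Set.Finite.subset (Set.Finite.biUnion hC fun p _ => Set.Finite.biUnion hC fun q _ =>
    finite_setOf_isMinCut_separating (G := G) (o := o) hconn p.1 q.1) ?_
  rintro E ⟨hE, hn⟩
  have h1 : ∃ p ∈ X.outBoundary C, p.1 ∈ E := by
    by_contra! h
    rcases (hE.connectedOn hconn).subset_or_subset_compl h with h | h
    · exact hn (Set.Nested.symm (.inl h))
    · exact hn (Set.Nested.symm (.inr (.inl h)))
  have h2 : ∃ p ∈ X.outBoundary C, p.1 ∈ Eᶜ := by
    by_contra! h
    rcases (hE.compl.connectedOn hconn).subset_or_subset_compl h with h | h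
    · exact hn (Set.Nested.symm (.inr (.inr (.inl h))))
    · exact hn (Set.Nested.symm (.inr (.inr (.inr h))))
  obtain ⟨p, hp, hpE⟩ := h1
  obtain ⟨q, hq, hqE⟩ := h2
  exact Set.mem_biUnion hp (Set.mem_biUnion hq ⟨hE, hpE, hqE⟩)

theorem IsMinCut.inter_union (hC : IsMinCut G X o C) (hD : IsMinCut G X o D)
    (h : Essential G o (C ∩ D)) (h' : Essential G o (Cᶜ ∩ Dᶜ)) :
    IsMinCut G X o (C ∩ D) ∧ IsMinCut G X o (C ∪ D) := by
  have hf := (hC.finite.union hD.finite).subset (X.outBoundary_inter_union_union_subset C D)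
  have h1 : IsCut G X o (C ∩ D) := ⟨hf.subset Set.subset_union_left, h,
    h'.mono (Set.inter_subset_left.trans (Set.compl_subset_compl.2 Set.inter_subset_left))⟩
  have h2 : IsCut G X o (C ∪ D) := ⟨hf.subset Set.subset_union_right,
    h.mono (Set.inter_subset_left.trans Set.subset_union_left), by rwa [Set.compl_union]⟩
  have hle := ncard_outBoundary_inter_add_union_le hC.finite hD.finite
  have hC1 := hC.ncard_le _ h1
  have hC2 := hC.ncard_le _ h2
  have hDC := hD.ncard_le _ hC.toIsCut
  refine ⟨⟨h1, fun E hE => ?_⟩, ⟨h2, fun E hE => ?_⟩⟩ <;>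
  · have := hC.ncard_le _ hE
    omega

variable (G X o) in
/-- The minimal cuts crossing `C`. -/
def crossing (C : Set V) : Set (Set V) := {E | IsMinCut G X o E ∧ ¬ C.Nested E}

theorem crossing_compl (C : Set V) : crossing G X o Cᶜ = crossing G X o C := by
  simp only [crossing, Set.Nested.compl_left_iff]

theorem nested_smul_iff (g : G) :
    (g • C).Nested (g • D) ↔ C.Nested D := by
  simp only [Set.Nested, ← Set.smul_set_compl, Set.smul_set_subset_smul_set_iff]

theorem crossing_smul (hX : ∀ (g : G) u v, X.Adj (g • u) (g • v) ↔ X.Adj u v) (g : G)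
    (C : Set V) : crossing G X o (g • C) = g • crossing G X o C := by
  ext E
  rw [Set.mem_smul_set_iff_inv_smul_mem]
  refine and_congr ⟨fun h => h.smul hX _, fun h => ?_⟩ ?_
  · simpa using h.smul hX g
  · rw [← nested_smul_iff g⁻¹, inv_smul_smul]

theorem IsMinCut.ncard_crossing_lt (hconn : X.Connected) (hC : IsMinCut G X o C)
    (hD : IsMinCut G X o D) (hCD : ¬ C.Nested D) (h : Essential G o (C ∩ D))
    (h' : Essential G o (Cᶜ ∩ Dᶜ)) :
    (crossing G X o (C ∩ D)).ncard + (crossing G X o (C ∪ D)).ncard <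
      (crossing G X o C).ncard + (crossing G X o D).ncard := by
  obtain ⟨h1, h2⟩ := hC.inter_union hD h h'
  have hf : ∀ {F}, IsMinCut G X o F → (crossing G X o F).Finite := fun hF =>
    finite_setOf_isMinCut_not_nested hconn hF.finite
  have hu : crossing G X o (C ∩ D) ∪ crossing G X o (C ∪ D) ⊂
      crossing G X o C ∪ crossing G X o D := by
    refine ⟨?_, fun hs => ?_⟩
    · rintro E (⟨hE, hn⟩ | ⟨hE, hn⟩)
      · by_contra hE'
        simp only [Set.mem_union, crossing, Set.mem_ofPred_eq, hE, true_and, not_or,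
          not_not] at hE'
        exact hn (hE'.1.inter hE'.2 hCD)
      · by_contra hE'
        simp only [Set.mem_union, crossing, Set.mem_ofPred_eq, hE, true_and, not_or,
          not_not] at hE'
        exact hn (hE'.1.union hE'.2 hCD)
    · have hm : C ∈ crossing G X o D := ⟨hC, fun hn => hCD hn.symm⟩
      rcases hs (Or.inr hm) with hm | hm
      · exact hm.2 (.inl Set.inter_subset_left)
      · exact hm.2 (Set.Nested.symm (.inl Set.subset_union_left))
  have hi : crossing G X o (C ∩ D) ∩ crossing G X o (C ∪ D) ⊆
      crossing G X o C ∩ crossing G X o D := by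
    rintro E ⟨⟨hE, hn1⟩, ⟨-, hn2⟩⟩
    refine ⟨⟨hE, fun hn => ?_⟩, ⟨hE, fun hn => ?_⟩⟩
    · exact (hn.inter_or_union (D := D)).elim hn1 hn2
    · rw [Set.inter_comm] at hn1
      rw [Set.union_comm] at hn2
      exact (hn.inter_or_union (D := C)).elim hn1 hn2
  rw [← Set.ncard_union_add_ncard_inter _ _ (hf h1) (hf h2),
    ← Set.ncard_union_add_ncard_inter _ _ (hf hC) (hf hD)]
  exact add_lt_add_of_lt_of_le (Set.ncard_lt_ncard hu ((hf hC).union (hf hD)))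
    (Set.ncard_le_ncard hi ((hf hC).inter_of_left _))

/-- A minimal cut crossing as few minimal cuts as possible. -/
structure IsOptimalCut (G : Type*) [Group G] [MulAction G V] (X : SimpleGraph V) (o : V)
    (C : Set V) : Prop extends IsMinCut G X o C where
  ncard_crossing_le : ∀ D, IsMinCut G X o D →
    (crossing G X o C).ncard ≤ (crossing G X o D).ncard

theorem exists_isOptimalCut (h : IsCut G X o C) : ∃ D, IsOptimalCut G X o D := by
  obtain ⟨D, hD, hmin⟩ := (measure fun C => (crossing G X o C).ncard).wf.has_min
    {C | IsMinCut G X o C} (exists_isMinCut h)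
  exact ⟨D, hD, fun E hE => not_lt.1 (hmin E hE)⟩

theorem IsOptimalCut.compl (h : IsOptimalCut G X o C) : IsOptimalCut G X o Cᶜ :=
  ⟨h.toIsMinCut.compl, by rw [crossing_compl]; exact h.ncard_crossing_le⟩

theorem IsOptimalCut.smul (hX : ∀ (g : G) u v, X.Adj (g • u) (g • v) ↔ X.Adj u v) (g : G)
    (h : IsOptimalCut G X o C) : IsOptimalCut G X o (g • C) := by
  refine ⟨h.toIsMinCut.smul hX g, ?_⟩
  rw [crossing_smul hX, Set.ncard_smul_set]
  exact h.ncard_crossing_le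

theorem IsOptimalCut.nested_of_essential (hconn : X.Connected) (hC : IsOptimalCut G X o C)
    (hD : IsOptimalCut G X o D) (h : Essential G o (C ∩ D)) (h' : Essential G o (Cᶜ ∩ Dᶜ)) :
    C.Nested D := by
  by_contra hn
  obtain ⟨h1, h2⟩ := hC.inter_union hD.toIsMinCut h h'
  have := hC.ncard_crossing_lt hconn hD.toIsMinCut hn h h'
  have := hC.ncard_crossing_le _ h1
  have := hD.ncard_crossing_le _ h2
  omega

theorem IsOptimalCut.nested (hconn : X.Connected) (hC : IsOptimalCut G X o C)
    (hD : IsOptimalCut G X o D) : C.Nested D := by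
  by_cases h : Essential G o (C ∩ D) ∧ Essential G o (Cᶜ ∩ Dᶜ)
  · exact hC.nested_of_essential hconn hD h.1 h.2
  · rw [← Set.Nested.compl_right_iff]
    have hC1 := hC.essential.or_of_subset_union (D := C ∩ D) (E := C ∩ Dᶜ)
      (Set.inter_union_compl C D).ge
    have hC2 := hC.essential_compl.or_of_subset_union (D := Cᶜ ∩ D) (E := Cᶜ ∩ Dᶜ)
      (Set.inter_union_compl _ D).ge
    have hD1 := hD.essential.or_of_subset_union (D := C ∩ D) (E := Cᶜ ∩ D) (by
      rw [Set.inter_comm, Set.inter_comm Cᶜ]; exact (Set.inter_union_compl D C).ge)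
    have hD2 := hD.essential_compl.or_of_subset_union (D := C ∩ Dᶜ) (E := Cᶜ ∩ Dᶜ) (by
      rw [Set.inter_comm, Set.inter_comm Cᶜ]; exact (Set.inter_union_compl _ C).ge)
    refine hC.nested_of_essential hconn hD.compl ?_ ?_
    · tauto
    · rw [compl_compl]
      tauto

end SimpleGraph

namespace TreeSet

/-- The action on the first factor of the lexicographic product `P ×ₗ Bool`. -/
instance lexBoolMulAction {G P : Type*} [Group G] [MulAction G P] : MulAction G (P ×ₗ Bool) where
  smul g p := toLex (g • (ofLex p).1, (ofLex p).2)
  one_smul p := by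
    change toLex ((1 : G) • (ofLex p).1, (ofLex p).2) = p
    rw [one_smul]; rfl
  mul_smul g h p := by
    change toLex ((g * h) • (ofLex p).1, (ofLex p).2) = toLex (g • h • (ofLex p).1, (ofLex p).2)
    rw [mul_smul]

theorem toLex_le_toLex {P : Type*} [PartialOrder P] {x y : P} {i j : Bool} :
    toLex (x, i) ≤ toLex (y, j) ↔ x < y ∨ x = y ∧ i ≤ j := Prod.Lex.toLex_le_toLex

theorem toLex_lt_toLex {P : Type*} [PartialOrder P] {x y : P} {i j : Bool} (h : x < y) :
    toLex (x, i) < toLex (y, j) := Prod.Lex.toLex_lt_toLex.2 (Or.inl h)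

theorem le_of_toLex_le_toLex {P : Type*} [PartialOrder P] {x y : P} {i j : Bool}
    (h : toLex (x, i) ≤ toLex (y, j)) : x ≤ y :=
  (toLex_le_toLex.1 h).elim le_of_lt fun h => h.1.le

variable {G P : Type*} [Group G] [PartialOrder P] [MulAction G P] (E : TreeSet G P)

theorem toLex_le_or {x y : P} (i j : Bool) (h : x ≤ y) :
    toLex (x, i) ≤ toLex (y, j) ∨ toLex (E.star x, !i) ≤ toLex (E.star y, !j) := by
  rcases h.eq_or_lt with rfl | h
  · rcases i <;> rcases j <;> simp [toLex_le_toLex]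
  · exact Or.inl (toLex_lt_toLex h).le

/-- The tree set obtained by subdividing every edge. -/
def double : TreeSet G (P ×ₗ Bool) where
  star p := toLex (E.star (ofLex p).1, !(ofLex p).2)
  star_star p := by simp [E.star_star]
  star_le := by
    rintro ⟨x, i⟩ ⟨y, j⟩ h
    rcases toLex_le_toLex.1 h with h | ⟨rfl, h'⟩
    · refine (toLex_lt_toLex (lt_of_le_of_ne (E.star_le h.le) ?_)).le
      exact fun h' => h.ne' (E.star_inj.1 h')
    · refine toLex_le_toLex.2 (Or.inr ⟨rfl, ?_⟩)
      clear h
      change (!j) ≤ !i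
      revert i j
      decide
  nested := by
    rintro ⟨x, i⟩ ⟨y, j⟩
    rcases E.nested x y with h | h | h | h
    · rcases E.toLex_le_or i j h with h | h
      · exact .inl h
      · exact .inr (.inr (.inr h))
    · rcases E.toLex_le_or i (!j) h with h | h
      · exact .inr (.inl h)
      · rw [E.star_star, Bool.not_not] at h
        exact .inr (.inr (.inl h))
    · rcases E.toLex_le_or (!i) j h with h | h
      · exact .inr (.inr (.inl h))
      · rw [E.star_star, Bool.not_not] at h
        exact .inr (.inl h)
    · rcases E.toLex_le_or (!i) (!j) h with h | h
      · exact .inr (.inr (.inr h))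
      · rw [E.star_star, E.star_star, Bool.not_not, Bool.not_not] at h
        exact .inl h
  not_le_star := by
    rintro ⟨x, i⟩ ⟨y, j⟩ h h'
    exact E.not_le_star (le_of_toLex_le_toLex h) (le_of_toLex_le_toLex h')
  finite_Icc := by
    rintro ⟨x, i⟩ ⟨y, j⟩
    refine (((E.finite_Icc x y).prod (Set.finite_univ (α := Bool))).image toLex).subset ?_
    rintro ⟨z, k⟩ ⟨h1, h2⟩
    exact ⟨(z, k), ⟨⟨le_of_toLex_le_toLex h1, le_of_toLex_le_toLex h2⟩, trivial⟩, rfl⟩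
  smul_le := by
    rintro g ⟨x, i⟩ ⟨y, j⟩ h
    refine toLex_le_toLex.2 ((toLex_le_toLex.1 h).imp (E.smul_lt_iff g).2 ?_)
    rintro ⟨rfl, h'⟩
    exact ⟨rfl, h'⟩
  smul_star := by
    rintro g ⟨x, i⟩
    change toLex (g • E.star x, !i) = toLex (E.star (g • x), !i)
    rw [E.smul_star]

theorem IsOrientation.double {E : TreeSet G P} {O : Set P} (h : E.IsOrientation O) :
    E.double.IsOrientation {p | (ofLex p).1 ∈ O} where
  star_mem p := h.star_mem (ofLex p).1
  mem_of_le := by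
    rintro ⟨x, i⟩ ⟨y, j⟩ hx hxy
    exact h.mem_of_le hx (le_of_toLex_le_toLex hxy)

open scoped Pointwise in
/-- A version of `exists_splitting` that allows inversions. -/
theorem exists_splitting_of_orbit [Countable P] [Nonempty P]
    (horb : ∀ x y : P, ∃ g : G, g • x = y ∨ g • x = E.star y)
    (hstab : ∀ x : P, {g : G | g • x = x}.Finite)
    (htrans : ∀ x : P, ∃ g : G, x < g • x ∨ x < E.star (g • x)) :
    ∃ (W : Type) (T : SimpleGraph W) (ρ : G →* Equiv.Perm W),
      T.IsTree ∧
      (∀ (g : G) (u v : W), T.Adj (ρ g u) (ρ g v) ↔ T.Adj u v) ∧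
      (∀ (g : G) (u v : W), T.Adj u v → ¬(ρ g u = v ∧ ρ g v = u)) ∧
      (∀ u v x y : W, T.Adj u v → T.Adj x y →
        ∃ g : G, (ρ g u = x ∧ ρ g v = y) ∨ (ρ g u = y ∧ ρ g v = x)) ∧
      (∀ u v : W, T.Adj u v → {g : G | ρ g u = u ∧ ρ g v = v}.Finite) ∧
      (¬ ∃ w : W, ∀ g : G, ρ g w = w) ∧
      (∀ (S : Set G) (O : Set P), E.IsOrientation O → (∀ g ∈ S, ∀ y, g • y ∈ O ↔ y ∈ O) →
        (∃ x ∈ O, ∀ y ∈ O, y ≤ x → y = x) → ∃ w : W, ∀ g ∈ S, ρ g w = w) := by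
  by_cases hinv : ∃ (g : G) (x : P), g • x = E.star x
  · obtain ⟨g₀, x₀, h₀⟩ := hinv
    have hinv' : ∀ y, ∃ g : G, g • E.star y = y := by
      intro y
      obtain ⟨c, hc | hc⟩ := horb x₀ y
      · refine ⟨c * g₀⁻¹ * c⁻¹, ?_⟩
        rw [← hc, ← E.smul_star, ← h₀]
        simp [mul_smul]
      · refine ⟨c * g₀ * c⁻¹, ?_⟩
        rw [← hc, mul_smul, mul_smul, inv_smul_smul, h₀, E.smul_star, hc, E.star_star]
    have horb' : ∀ x y : P, ∃ g : G, g • x = y := by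
      intro x y
      obtain ⟨c, hc | hc⟩ := horb x y
      · exact ⟨c, hc⟩
      · obtain ⟨g, hg⟩ := hinv' y
        exact ⟨g * c, by rw [mul_smul, hc, hg]⟩
    have : Countable (P ×ₗ Bool) := inferInstanceAs (Countable (P × Bool))
    have : Nonempty (P ×ₗ Bool) := inferInstanceAs (Nonempty (P × Bool))
    have hd1 : ∀ (g : G) (p : P ×ₗ Bool), g • p ≠ E.double.star p := by
      rintro g ⟨x, i⟩ h
      have : i = !i := congrArg (fun p => (ofLex p).2) h
      exact Bool.not_ne_self i this.symm
    have hd2 : ∀ p q : P ×ₗ Bool, ∃ g : G, g • p = q ∨ g • p = E.double.star q := by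
      rintro ⟨x, i⟩ ⟨y, j⟩
      by_cases hij : i = j
      · obtain ⟨g, hg⟩ := horb' x y
        refine ⟨g, Or.inl ?_⟩
        change toLex (g • x, i) = toLex (y, j)
        rw [hg, hij]
      · obtain ⟨g, hg⟩ := horb' x (E.star y)
        refine ⟨g, Or.inr ?_⟩
        change toLex (g • x, i) = toLex (E.star y, !j)
        rw [hg]
        congr 2
        revert hij
        cases i <;> cases j <;> simp
    have hd3 : ∀ p : P ×ₗ Bool, {g : G | g • p = p}.Finite := by
      rintro ⟨x, i⟩
      refine (hstab x).subset fun g hg => ?_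
      have h : toLex (g • x, i) = toLex (x, i) := hg
      exact congrArg (fun p : P ×ₗ Bool => (ofLex p).1) h
    have hd4 : ∀ p : P ×ₗ Bool, ∃ g : G, p < g • p ∨ p < E.double.star (g • p) := by
      rintro ⟨x, i⟩
      obtain ⟨g, hg | hg⟩ := htrans x
      · exact ⟨g, Or.inl (toLex_lt_toLex hg)⟩
      · exact ⟨g, Or.inr (toLex_lt_toLex hg)⟩
    obtain ⟨W, T, ρ, h1, h2, h3, h4, h5, h6, h7⟩ := E.double.exists_splitting hd1 hd2 hd3 hd4
    refine ⟨W, T, ρ, h1, h2, h3, h4, h5, h6, ?_⟩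
    rintro S O hO hS ⟨x, hx, hmin⟩
    refine h7 S _ hO.double (fun g hg p => hS g hg (ofLex p).1) ⟨toLex (x, false), hx, ?_⟩
    rintro ⟨y, j⟩ hy hyx
    have := hmin y hy (le_of_toLex_le_toLex hyx)
    subst this
    rcases toLex_le_toLex.1 hyx with h | ⟨-, h⟩
    · exact absurd h (lt_irrefl _)
    · rw [le_bot_iff.1 h]
      rfl
  · push Not at hinv
    exact E.exists_splitting hinv horb hstab htrans

end TreeSet

namespace SimpleGraph

open scoped Pointwise

variable {G V : Type*} [Group G] [MulAction G V] {X : SimpleGraph V} {o : V} {C : Set V}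

variable (G) in
/-- The translates of `C` and their complements. -/
def cutOrbit (C : Set V) : SubMulAction G (Set V) where
  carrier := {D | ∃ g : G, D = g • C ∨ D = (g • C)ᶜ}
  smul_mem' := by
    rintro g D ⟨h, rfl | rfl⟩
    · exact ⟨g * h, Or.inl (mul_smul g h C).symm⟩
    · exact ⟨g * h, Or.inr (by rw [Set.smul_set_compl, mul_smul])⟩

theorem mem_cutOrbit {D : Set V} : D ∈ cutOrbit G C ↔ ∃ g : G, D = g • C ∨ D = (g • C)ᶜ := Iff.rfl

theorem IsOptimalCut.of_mem_cutOrbit (hX : ∀ (g : G) u v, X.Adj (g • u) (g • v) ↔ X.Adj u v)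
    (hC : IsOptimalCut G X o C) {D : Set V} (hD : D ∈ cutOrbit G C) : IsOptimalCut G X o D := by
  obtain ⟨g, rfl | rfl⟩ := hD
  · exact hC.smul hX g
  · exact (hC.smul hX g).compl

/-- The tree set formed by the translates of an optimal cut and their complements. -/
def cutTreeSet (hX : ∀ (g : G) u v, X.Adj (g • u) (g • v) ↔ X.Adj u v) (hconn : X.Connected)
    (hC : IsOptimalCut G X o C) : TreeSet G (cutOrbit G C) where
  star D := ⟨(D : Set V)ᶜ, by
    obtain ⟨g, hg | hg⟩ := mem_cutOrbit.1 D.2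
    · exact ⟨g, Or.inr (by rw [hg])⟩
    · exact ⟨g, Or.inl (by rw [hg, compl_compl])⟩⟩
  star_star D := Subtype.ext (compl_compl _)
  star_le h := Set.compl_subset_compl.2 h
  nested D E := (hC.of_mem_cutOrbit hX D.2).nested hconn (hC.of_mem_cutOrbit hX E.2)
  not_le_star := by
    intro D E h h'
    obtain ⟨x, hx⟩ := (hC.of_mem_cutOrbit hX D.2).essential.nonempty
    exact h' hx (h hx)
  finite_Icc := by
    intro D E
    obtain ⟨x, hx⟩ := (hC.of_mem_cutOrbit hX D.2).essential.nonempty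
    obtain ⟨y, hy⟩ := (hC.of_mem_cutOrbit hX E.2).essential_compl.nonempty
    refine ((finite_setOf_isMinCut_separating (G := G) (o := o) hconn x y).preimage
      Subtype.val_injective.injOn).subset ?_
    rintro F ⟨h1, h2⟩
    exact ⟨(hC.of_mem_cutOrbit hX F.2).toIsMinCut, h1 hx, fun h => hy (h2 h)⟩
  smul_le g D E h := Set.smul_set_mono h
  smul_star g D := Subtype.ext Set.smul_set_compl

theorem coe_cutTreeSet_star (hX : ∀ (g : G) u v, X.Adj (g • u) (g • v) ↔ X.Adj u v)
    (hconn : X.Connected) (hC : IsOptimalCut G X o C) (D : cutOrbit G C) :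
    ((cutTreeSet hX hconn hC).star D : Set V) = (D : Set V)ᶜ := rfl

theorem finite_setOf_smul_mem {α : Type*} [MulAction G α] {S : Set α} (hS : S.Finite) {a : α}
    (ha : {g : G | g • a = a}.Finite) : {g : G | g • a ∈ S}.Finite := by
  refine Set.Finite.preimage' (f := fun g : G => g • a) hS fun b _ => ?_
  by_cases hb : ∃ g : G, g • a = b
  · obtain ⟨g, rfl⟩ := hb
    refine (ha.image (g * ·)).subset fun h hh => ⟨g⁻¹ * h, ?_, mul_inv_cancel_left g h⟩
    change (g⁻¹ * h) • a = a
    rw [mul_smul, inv_smul_eq_iff]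
    exact hh
  · refine Set.finite_empty.subset fun g hg => hb ⟨g, hg⟩

/-- A group acting on a connected graph with finite edge stabilizers and an essential cut splits
over a finite subgroup, in such a way that all vertex stabilizers are elliptic. -/
theorem exists_splitting_of_isCut [Countable G]
    (hX : ∀ (g : G) u v, X.Adj (g • u) (g • v) ↔ X.Adj u v) (hconn : X.Connected)
    (hstab : ∀ u v, X.Adj u v → {g : G | g • u = u ∧ g • v = v}.Finite)
    (horb : ∀ u v, X.Adj u v → u ∈ MulAction.orbit G o ∨ v ∈ MulAction.orbit G o)
    (hcut : IsCut G X o C) :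
    ∃ (W : Type) (T : SimpleGraph W) (ρ : G →* Equiv.Perm W),
      T.IsTree ∧
      (∀ (g : G) (u v : W), T.Adj (ρ g u) (ρ g v) ↔ T.Adj u v) ∧
      (∀ (g : G) (u v : W), T.Adj u v → ¬(ρ g u = v ∧ ρ g v = u)) ∧
      (∀ u v x y : W, T.Adj u v → T.Adj x y →
        ∃ g : G, (ρ g u = x ∧ ρ g v = y) ∨ (ρ g u = y ∧ ρ g v = x)) ∧
      (∀ u v : W, T.Adj u v → {g : G | ρ g u = u ∧ ρ g v = v}.Finite) ∧
      (¬ ∃ w : W, ∀ g : G, ρ g w = w) ∧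
      (∀ v : V, ∃ w : W, ∀ g : G, g • v = v → ρ g w = w) := by
  obtain ⟨D, hD⟩ := exists_isOptimalCut hcut
  have hopt : ∀ F : cutOrbit G D, IsOptimalCut G X o (F : Set V) := fun F =>
    hD.of_mem_cutOrbit hX F.2
  have hpair : ∀ {e : V × V}, X.Adj e.1 e.2 → {g : G | g • e = e}.Finite := fun {e} he =>
    (hstab _ _ he).subset fun g hg => ⟨congrArg Prod.fst hg, congrArg Prod.snd hg⟩
  have : Nonempty (cutOrbit G D) := ⟨⟨D, 1, Or.inl (one_smul G D).symm⟩⟩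
  have : Countable (cutOrbit G D) := by
    have h : (cutOrbit G D : Set (Set V)) ⊆
        Set.range (fun g : G => g • D) ∪ Set.range fun g : G => (g • D)ᶜ := by
      rintro F ⟨g, rfl | rfl⟩
      · exact Or.inl ⟨g, rfl⟩
      · exact Or.inr ⟨g, rfl⟩
    exact (((Set.countable_range _).union (Set.countable_range _)).mono h).to_subtype
  have h1 : ∀ E F : cutOrbit G D, ∃ g : G, g • E = F ∨
      g • E = (cutTreeSet hX hconn hD).star F := by
    rintro ⟨E, hE⟩ ⟨F, hF⟩
    obtain ⟨g, hg⟩ := mem_cutOrbit.1 hE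
    obtain ⟨h, hh⟩ := mem_cutOrbit.1 hF
    refine ⟨h * g⁻¹, ?_⟩
    simp only [Subtype.ext_iff, coe_cutTreeSet_star, SubMulAction.val_smul]
    rcases hg with rfl | rfl <;> rcases hh with rfl | rfl <;>
      simp [mul_smul, Set.smul_set_compl]
  have h2 : ∀ F : cutOrbit G D, {g : G | g • F = F}.Finite := by
    intro F
    obtain ⟨e, he⟩ := outBoundary_nonempty hconn (hopt F).essential.nonempty
      (hopt F).essential_compl.nonempty
    refine (finite_setOf_smul_mem (hopt F).finite (hpair he.1)).subset fun g hg => ?_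
    have : g • (F : Set V) = F := congrArg Subtype.val hg
    change g • e ∈ X.outBoundary (F : Set V)
    rw [← this, outBoundary_smul hX]
    exact Set.smul_mem_smul_set he
  have h3 : ∀ F : cutOrbit G D, ∃ g : G, F < g • F ∨
      F < (cutTreeSet hX hconn hD).star (g • F) := by
    intro F
    obtain ⟨⟨a, b⟩, he⟩ := outBoundary_nonempty hconn (hopt F).essential.nonempty
      (hopt F).essential_compl.nonempty
    have hfin := (finite_setOf_smul_mem (hopt F).finite (hpair he.1)).union
      (finite_setOf_smul_mem (hopt F).toIsCut.compl.finite (hpair he.1))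
    have hinf : {g : G | g • a ∉ (F : Set V) ∨ g • b ∉ (F : Set V)}.Infinite := by
      have key : ∀ v ∈ MulAction.orbit G o, {g : G | g • v ∉ (F : Set V)}.Infinite := by
        rintro _ ⟨k, rfl⟩
        refine ((hopt F).essential_compl.image (mul_left_injective k⁻¹).injOn).mono ?_
        rintro _ ⟨g, hg, rfl⟩
        simpa [mul_smul] using hg
      rcases horb a b he.1 with h | h
      · exact (key a h).mono fun g => Or.inl
      · exact (key b h).mono fun g => Or.inr
    obtain ⟨g, hg, hg'⟩ := (hinf.sdiff hfin).nonempty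
    simp only [Set.mem_union, Set.mem_ofPred_eq, outBoundary, Prod.smul_mk, hX, he.1, true_and,
      Set.mem_compl_iff] at hg hg'
    have ha : g • a ∉ (F : Set V) := by tauto
    have hb : g • b ∉ (F : Set V) := by tauto
    have ha' : g • a ∈ g • (F : Set V) := Set.smul_mem_smul_set he.2.1
    have hb' : g • b ∉ g • (F : Set V) := fun h => he.2.2 (Set.smul_mem_smul_set_iff.1 h)
    refine ⟨g, ?_⟩
    rcases (hopt F).nested hconn (hopt (g • F)) with h | h | h | h
    · exact Or.inl (lt_of_le_of_ne h fun h' => ha (by rw [h']; exact ha'))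
    · refine Or.inr (lt_of_le_of_ne h fun h' => hb ?_)
      rw [h', coe_cutTreeSet_star]
      exact hb'
    · exact absurd (h hb) hb'
    · exact absurd ha' (h ha)
  obtain ⟨W, T, ρ, t1, t2, t3, t4, t5, t6, t7⟩ :=
    (cutTreeSet hX hconn hD).exists_splitting_of_orbit h1 h2 h3
  refine ⟨W, T, ρ, t1, t2, t3, t4, t5, t6, fun v => ?_⟩
  refine t7 {g | g • v = v} {F | v ∈ (F : Set V)} ⟨fun F => Iff.rfl, fun hF h => h hF⟩ ?_ ?_
  · intro g hg F
    change v ∈ g • (F : Set V) ↔ v ∈ (F : Set V)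
    nth_rewrite 1 [← (hg : g • v = v)]
    exact Set.smul_mem_smul_set_iff
  · have hne : ∃ F : cutOrbit G D, v ∈ (F : Set V) := by
      obtain ⟨F⟩ := ‹Nonempty (cutOrbit G D)›
      by_cases hv : v ∈ (F : Set V)
      · exact ⟨F, hv⟩
      · exact ⟨(cutTreeSet hX hconn hD).star F, hv⟩
    obtain ⟨F, hF⟩ := hne
    obtain ⟨y, hy⟩ := (hopt F).essential_compl.nonempty
    have hfin : {E : cutOrbit G D | v ∈ (E : Set V) ∧ E ≤ F}.Finite := by
      refine ((finite_setOf_isMinCut_separating (G := G) (o := o) hconn v y).preimage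
        Subtype.val_injective.injOn).subset ?_
      rintro E ⟨h1, h2⟩
      exact ⟨(hopt E).toIsMinCut, h1, fun h => hy (h2 h)⟩
    obtain ⟨E, hE⟩ := hfin.exists_minimal ⟨F, hF, le_rfl⟩
    refine ⟨E, hE.prop.1, fun E' hE' hle => ?_⟩
    exact hle.antisymm (hE.le_of_le ⟨hE', hle.trans hE.prop.2⟩ hle)

end SimpleGraph

namespace Monoid.CoprodI

section FirstIndex

variable {ι : Type*} {M : ι → Type*} [∀ i, Monoid (M i)]

open Classical in
/-- The index of the first letter of the reduced word representing `x`. -/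
noncomputable def fstIdx (x : CoprodI M) : Option ι := (Word.equiv x).fstIdx

theorem fstIdx_prod (w : Word M) : fstIdx w.prod = w.fstIdx := by
  classical
  exact congrArg Word.fstIdx (Word.equiv.apply_symm_apply w)

theorem exists_prod_eq (x : CoprodI M) : ∃ w : Word M, w.prod = x := by
  classical
  exact ⟨Word.equiv x, Word.equiv.symm_apply_apply x⟩

theorem fstIdx_one : fstIdx (1 : CoprodI M) = none := fstIdx_prod Word.empty

theorem fstIdx_of_mul {i : ι} {m : M i} (hm : m ≠ 1) {x : CoprodI M} (hx : fstIdx x ≠ some i) :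
    fstIdx (of m * x) = some i := by
  obtain ⟨w, rfl⟩ := exists_prod_eq x
  rw [fstIdx_prod] at hx
  rw [← Word.prod_cons i m w hm hx, fstIdx_prod, Word.fstIdx_cons]

theorem fstIdx_of {i : ι} {m : M i} (hm : m ≠ 1) : fstIdx (of m) = some i := by
  rw [← mul_one (of m), fstIdx_of_mul hm (by simp [fstIdx_one])]

theorem reduced_induction {motive : CoprodI M → Prop} (x : CoprodI M) (one : motive 1)
    (cons : ∀ (i) (m : M i) (x), m ≠ 1 → fstIdx x ≠ some i → motive x → motive (of m * x)) :
    motive x := by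
  obtain ⟨w, rfl⟩ := exists_prod_eq x
  induction w using Word.consRecOn with
  | empty => exact one
  | cons i m w h1 h2 ih =>
    rw [Word.prod_cons]
    exact cons i m _ h2 (by rwa [fstIdx_prod]) ih

theorem fstIdx_eq_none_iff {x : CoprodI M} : fstIdx x = none ↔ x = 1 := by
  refine ⟨fun h => ?_, fun h => by rw [h, fstIdx_one]⟩
  induction x using reduced_induction with
  | one => rfl
  | cons i m x hm hx _ => simp [fstIdx_of_mul hm hx] at h

theorem fstIdx_of_ne {i j : ι} (hij : i ≠ j) (m : M i) : fstIdx (of m) ≠ some j := by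
  by_cases hm : m = 1
  · simp [hm, fstIdx_one]
  · simpa [fstIdx_of hm] using hij

theorem mem_range_or_fstIdx_mul_of {i : ι} (x : CoprodI M) (m : M i) :
    (∃ l : M i, x = of l) ∨ fstIdx (x * of m) = fstIdx x := by
  induction x using reduced_induction with
  | one => exact Or.inl ⟨1, (map_one _).symm⟩
  | cons k l y hl hy ih =>
    rcases ih with ⟨p, rfl⟩ | ih
    · by_cases hk : k = i
      · subst hk
        exact Or.inl ⟨l * p, (map_mul _ _ _).symm⟩
      · right
        rw [mul_assoc, ← map_mul, fstIdx_of_mul hl (fstIdx_of_ne (Ne.symm hk) _),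
          fstIdx_of_mul hl hy]
    · right
      rw [mul_assoc, fstIdx_of_mul hl (by rwa [ih]), fstIdx_of_mul hl hy]

theorem fstIdx_mul_of_eq_some_iff {i j : ι} (hij : i ≠ j) (x : CoprodI M) (m : M i) :
    fstIdx (x * of m) = some j ↔ fstIdx x = some j := by
  rcases mem_range_or_fstIdx_mul_of x m with ⟨l, rfl⟩ | h
  · rw [← map_mul]
    exact iff_of_false (fstIdx_of_ne hij _) (fstIdx_of_ne hij _)
  · rw [h]

end FirstIndex

variable {ι : Type*} {M : ι → Type*} [∀ i, Group (M i)]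

theorem fstIdx_mul_of_eq_some_or_iff {i : ι} (x : CoprodI M) (m : M i) :
    fstIdx (x * of m) = some i ∨ x * of m = 1 ↔ fstIdx x = some i ∨ x = 1 := by
  have key : ∀ l : M i, fstIdx (of l) = some i ∨ of l = 1 := by
    intro l
    by_cases hl : l = 1
    · exact Or.inr (by rw [hl, map_one])
    · exact Or.inl (fstIdx_of hl)
  rcases mem_range_or_fstIdx_mul_of x m with ⟨l, rfl⟩ | h
  · rw [← map_mul]
    exact iff_of_true (key _) (key _)
  · rw [h, ← fstIdx_eq_none_iff (x := x * of m), ← fstIdx_eq_none_iff (x := x), h]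

theorem infinite_setOf_fstIdx_eq {i j : ι} (hij : i ≠ j) {m : M i} (hm : m ≠ 1) {n : M j}
    (hn : n ≠ 1) : {x : CoprodI M | fstIdx x = some i}.Infinite := by
  intro hfin
  have hn' : ∀ {x : CoprodI M}, fstIdx x = some i → fstIdx (of n * x) = some j := fun {x} hx =>
    fstIdx_of_mul hn (by simpa [hx] using hij)
  have hsub : (of m * of n * ·) '' {x : CoprodI M | fstIdx x = some i} ⊆
      {x | fstIdx x = some i} := by
    rintro _ ⟨x, hx, rfl⟩
    change fstIdx (of m * of n * x) = some i
    rw [mul_assoc]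
    exact fstIdx_of_mul hm (by simpa [hn' hx] using hij.symm)
  have heq := Set.eq_of_subset_of_ncard_le hsub
    (Set.ncard_image_of_injective _ (mul_right_injective _)).ge hfin
  obtain ⟨x, hx, hxm⟩ : (of m : CoprodI M) ∈ (of m * of n * ·) '' {x | fstIdx x = some i} :=
    heq.symm ▸ fstIdx_of hm
  have h1 : of n * x = 1 := by simpa [mul_assoc] using hxm
  have := hn' hx
  rw [h1, fstIdx_one] at this
  cases this

theorem infinite_setOf_fstIdx_ne {i j : ι} (hij : i ≠ j) {m : M i} (hm : m ≠ 1) {n : M j}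
    (hn : n ≠ 1) : {x : CoprodI M | fstIdx x = some i}ᶜ.Infinite :=
  (infinite_setOf_fstIdx_eq hij.symm hn hm).mono fun x (hx : fstIdx x = some j) => by
    simpa [hx] using hij.symm

theorem exists_not_commute {i j : ι} (hij : i ≠ j) {m : M i} (hm : m ≠ 1) {n : M j}
    (hn : n ≠ 1) {x : CoprodI M} (hx : x ≠ 1) : ∃ y, ¬ Commute x y := by
  have key : ∀ {k : ι} {l : M k}, l ≠ 1 → fstIdx x ≠ some k → ¬ Commute x (of l) := by
    intro k l hl hk h
    have h1 := fstIdx_of_mul hl hk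
    rw [← h.eq] at h1
    rcases mem_range_or_fstIdx_mul_of x l with ⟨p, rfl⟩ | h2
    · exact hk (fstIdx_of fun hp => hx (by rw [hp, map_one]))
    · exact hk (h2 ▸ h1)
  by_cases hxi : fstIdx x = some i
  · exact ⟨_, key hn (by simpa [hxi] using hij)⟩
  · exact ⟨_, key hm hxi⟩

end Monoid.CoprodI

namespace FreeProduct

open Monoid

variable {ι A : Type*} [Group A] {M : ι → Subgroup A}

theorem finite_not_iff_mul {C : Set A} {x y : A} (hx : {a | ¬ (a ∈ C ↔ a * x ∈ C)}.Finite)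
    (hy : {a | ¬ (a ∈ C ↔ a * y ∈ C)}.Finite) : {a | ¬ (a ∈ C ↔ a * (x * y) ∈ C)}.Finite := by
  refine (hx.union (hy.preimage (mul_left_injective x).injOn)).subset fun a ha => ?_
  simp only [Set.mem_union, Set.mem_ofPred_eq, Set.mem_preimage, mul_assoc] at ha ⊢
  tauto

/-- A set that differs in finitely many elements from a right `S`-invariant set is almost right
invariant under every element of `S`. -/
theorem finite_not_iff_mul_of_invariant {C D : Set A} (hD : {a | ¬ (a ∈ C ↔ a ∈ D)}.Finite) {x : A}
    (hx : ∀ a, a * x ∈ D ↔ a ∈ D) : {a | ¬ (a ∈ C ↔ a * x ∈ C)}.Finite := by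
  refine (hD.union (hD.preimage (mul_left_injective x).injOn)).subset fun a ha => ?_
  have := hx a
  simp only [Set.mem_union, Set.mem_ofPred_eq, Set.mem_preimage] at ha ⊢
  tauto

/-- In a free product there is an infinite set with infinite complement, all of whose right
translates are almost equal to it, and which is almost equal to a right `M i`-invariant set for
every factor `M i`. -/
theorem exists_almostInvariant
    (hM : Function.Bijective (CoprodI.lift fun i => (M i).subtype)) {i j : ι} (hij : i ≠ j)
    (hi : M i ≠ ⊥) (hj : M j ≠ ⊥) :
    ∃ C : Set A, C.Infinite ∧ Cᶜ.Infinite ∧ (∀ x, {a | ¬ (a ∈ C ↔ a * x ∈ C)}.Finite) ∧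
      ∀ k, ∃ D : Set A, {a | ¬ (a ∈ C ↔ a ∈ D)}.Finite ∧ ∀ a, ∀ x ∈ M k, (a * x ∈ D ↔ a ∈ D) := by
  obtain ⟨⟨m, hm⟩, hm1⟩ := Subgroup.ne_bot_iff_exists_ne_one.1 hi
  obtain ⟨⟨n, hn⟩, hn1⟩ := Subgroup.ne_bot_iff_exists_ne_one.1 hj
  let e : CoprodI (fun i => M i) ≃* A := MulEquiv.ofBijective _ hM
  have he : ∀ {k} (x : M k), e.symm x = CoprodI.of (M := fun i => M i) x := fun x => by
    rw [MulEquiv.symm_apply_eq]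
    exact (CoprodI.lift_of (fun i => (M i).subtype) x).symm
  let C : Set A := {a | CoprodI.fstIdx (e.symm a) = some i}
  have hC : ∀ k, ∃ D : Set A, {a | ¬ (a ∈ C ↔ a ∈ D)}.Finite ∧
      ∀ a, ∀ x ∈ M k, (a * x ∈ D ↔ a ∈ D) := by
    intro k
    by_cases hk : k = i
    · subst hk
      refine ⟨{a | CoprodI.fstIdx (e.symm a) = some k ∨ e.symm a = 1},
        (Set.finite_singleton 1).subset fun a ha => ?_, fun a x hx => ?_⟩
      · simp only [C, Set.mem_ofPred_eq, EmbeddingLike.map_eq_one_iff] at ha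
        rw [Set.mem_singleton_iff]
        tauto
      · have := CoprodI.fstIdx_mul_of_eq_some_or_iff (e.symm a) (⟨x, hx⟩ : M k)
        rwa [← he, ← map_mul] at this
    · refine ⟨C, Set.finite_empty.subset fun a ha => ha Iff.rfl, fun a x hx => ?_⟩
      have := CoprodI.fstIdx_mul_of_eq_some_iff hk (e.symm a) (⟨x, hx⟩ : M k)
      rwa [← he, ← map_mul] at this
  refine ⟨C, ?_, ?_, fun x => ?_, hC⟩
  · exact (CoprodI.infinite_setOf_fstIdx_eq hij hm1 hn1).preimage (by simp)
  · exact (CoprodI.infinite_setOf_fstIdx_ne hij hm1 hn1).preimage (by simp)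
  · obtain ⟨x, rfl⟩ := e.surjective x
    induction x using CoprodI.induction_on with
    | one => simp
    | of k x =>
      obtain ⟨D, hD, hD'⟩ := hC k
      rw [← he, MulEquiv.apply_symm_apply]
      exact finite_not_iff_mul_of_invariant hD fun a => hD' a x x.2
    | mul x y hx hy =>
      rw [map_mul]
      exact finite_not_iff_mul hx hy

theorem conj_injective
    (hM : Function.Bijective (CoprodI.lift fun i => (M i).subtype)) {i j : ι} (hij : i ≠ j)
    (hi : M i ≠ ⊥) (hj : M j ≠ ⊥) : Function.Injective (MulAut.conj (G := A)) := by
  obtain ⟨m, hm⟩ := Subgroup.ne_bot_iff_exists_ne_one.1 hi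
  obtain ⟨n, hn⟩ := Subgroup.ne_bot_iff_exists_ne_one.1 hj
  rw [injective_iff_map_eq_one]
  intro a ha
  let e : CoprodI (fun i => M i) ≃* A := MulEquiv.ofBijective _ hM
  by_contra ha1
  obtain ⟨y, hy⟩ := CoprodI.exists_not_commute (x := e.symm a) hij hm hn (by simpa using ha1)
  refine hy (e.injective ?_)
  have := DFunLike.congr_fun ha (e y)
  rw [MulAut.conj_apply, MulAut.one_apply, mul_inv_eq_iff_eq_mul] at this
  simpa using this

theorem fg (hM : Function.Surjective (CoprodI.lift fun i => (M i).subtype)) [Finite ι]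
    (hfg : ∀ i, Group.FG (M i)) : Group.FG A := by
  rw [Group.fg_def]
  have h := CoprodI.range_eq_iSup (fun i => M i) fun i => (M i).subtype
  rw [MonoidHom.range_eq_top.2 hM] at h
  rw [h]
  simp only [Subgroup.range_subtype]
  exact Subgroup.FG.iSup _ fun i => (Group.fg_iff_subgroup_fg _).1 (hfg i)

end FreeProduct

section ConedGraph

variable {G κ : Type*} [Group G] (S : Set G) (L : κ → Subgroup G)

/-- The relation generating the Cayley graph of `G` with respect to `S`, with a cone vertex added
over every left coset of every `L k`. -/
def conedRel : G ⊕ (Σ k, G ⧸ L k) → G ⊕ (Σ k, G ⧸ L k) → Prop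
  | .inl g, .inl h => g⁻¹ * h ∈ S
  | .inl g, .inr y => (g : G ⧸ L y.1) = y.2
  | .inr _, _ => False

/-- The Cayley graph of `G` with respect to `S`, with a cone vertex added over every left coset of
every `L k`. -/
def conedGraph : SimpleGraph (G ⊕ (Σ k, G ⧸ L k)) := SimpleGraph.fromRel (conedRel S L)

variable {S L}

theorem conedRel_smul (g : G) (u v : G ⊕ (Σ k, G ⧸ L k)) :
    conedRel S L (g • u) (g • v) ↔ conedRel S L u v := by
  rcases u with u | u <;> rcases v with v | ⟨k, v⟩
  · simp [conedRel, mul_assoc]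
  · exact smul_left_cancel_iff (α := G) (β := G ⧸ L k) (x := u) (y := v) g
  · exact Iff.rfl
  · exact Iff.rfl

theorem conedGraph_smul (g : G) (u v : G ⊕ (Σ k, G ⧸ L k)) :
    (conedGraph S L).Adj (g • u) (g • v) ↔ (conedGraph S L).Adj u v := by
  simp [conedGraph, SimpleGraph.fromRel_adj, conedRel_smul]

theorem exists_eq_inl_of_conedRel {u v : G ⊕ (Σ k, G ⧸ L k)} (h : conedRel S L u v) :
    ∃ g, u = .inl g := by
  rcases u with u | u
  · exact ⟨u, rfl⟩
  · exact h.elim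

theorem exists_eq_inl_of_conedGraph_adj {u v : G ⊕ (Σ k, G ⧸ L k)}
    (h : (conedGraph S L).Adj u v) : (∃ g, u = .inl g) ∨ ∃ g, v = .inl g :=
  h.2.imp exists_eq_inl_of_conedRel exists_eq_inl_of_conedRel

theorem conedGraph_reachable_of_conedRel {u v : G ⊕ (Σ k, G ⧸ L k)} (h : conedRel S L u v) :
    (conedGraph S L).Reachable u v := by
  by_cases huv : u = v
  · rw [huv]
  · exact SimpleGraph.Adj.reachable ⟨huv, Or.inl h⟩

theorem conedGraph_connected (hS : Subgroup.closure S = ⊤) : (conedGraph S L).Connected := by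
  have h1 : ∀ g h : G, (conedGraph S L).Reachable (.inl h) (.inl (h * g)) := by
    intro g
    have hg : g ∈ Subgroup.closure S := hS ▸ Subgroup.mem_top g
    induction hg using Subgroup.closure_induction with
    | mem s hs =>
      intro h
      refine conedGraph_reachable_of_conedRel ?_
      change h⁻¹ * (h * s) ∈ S
      rwa [inv_mul_cancel_left]
    | one =>
      intro h
      rw [mul_one]
    | mul x y _ _ hx hy =>
      intro h
      rw [← mul_assoc]
      exact (hx h).trans (hy _)
    | inv x _ hx =>
      intro h
      simpa using (hx (h * x⁻¹)).symm
  have h2 : ∀ v, (conedGraph S L).Reachable (.inl 1) v := by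
    rintro (g | ⟨k, x⟩)
    · simpa using h1 g 1
    · obtain ⟨g, rfl⟩ := QuotientGroup.mk_surjective x
      have h := h1 g 1
      rw [one_mul] at h
      exact h.trans (conedGraph_reachable_of_conedRel (rfl : ((g : G ⧸ L k)) = g))
  exact ⟨fun u v => (h2 u).symm.trans (h2 v)⟩

variable {C : Set G} {D : κ → Set G}

/-- The extension of a subset of `G` to the cone vertices by subsets of the `G ⧸ L k`. -/
def conedSet (L : κ → Subgroup G) (C : Set G) (D : κ → Set G) : Set (G ⊕ (Σ k, G ⧸ L k)) :=
  {v | Sum.elim (· ∈ C) (fun y => ∃ g ∈ D y.1, (g : G ⧸ L y.1) = y.2) v}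

theorem inl_mem_conedSet {g : G} : .inl g ∈ conedSet L C D ↔ g ∈ C := Iff.rfl

theorem inr_mem_conedSet (hD : ∀ k, ∀ g, ∀ x ∈ L k, (g * x ∈ D k ↔ g ∈ D k)) {k : κ} {g : G} :
    .inr ⟨k, g⟩ ∈ conedSet L C D ↔ g ∈ D k := by
  refine ⟨fun ⟨h, hh, heq⟩ => ?_, fun h => ⟨g, h, rfl⟩⟩
  rwa [← hD k h _ (QuotientGroup.eq.1 heq), mul_inv_cancel_left] at hh

theorem finite_outBoundary_conedSet [Finite κ] (hS : S.Finite)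
    (hD : ∀ k, ∀ g, ∀ x ∈ L k, (g * x ∈ D k ↔ g ∈ D k))
    (hC : ∀ x, {g | ¬ (g ∈ C ↔ g * x ∈ C)}.Finite)
    (hCD : ∀ k, {g | ¬ (g ∈ C ↔ g ∈ D k)}.Finite) :
    ((conedGraph S L).outBoundary (conedSet L C D)).Finite := by
  have hF : {p : _ × _ | conedRel S L p.1 p.2 ∧
      ¬ (p.1 ∈ conedSet L C D ↔ p.2 ∈ conedSet L C D)}.Finite := by
    refine ((hS.biUnion fun s _ => (hC s).image fun g => (Sum.inl g, Sum.inl (g * s))).union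
      (Set.finite_iUnion fun k => (hCD k).image fun g =>
        (Sum.inl g, Sum.inr ⟨k, (g : G ⧸ L k)⟩))).subset ?_
    rintro ⟨u | u, v | ⟨k, v⟩⟩ ⟨h, hn⟩
    · refine Or.inl (Set.mem_biUnion h ⟨u, ?_, by simp⟩)
      change ¬ (u ∈ C ↔ u * (u⁻¹ * v) ∈ C)
      rwa [mul_inv_cancel_left]
    · obtain rfl : (u : G ⧸ L k) = v := h
      refine Or.inr (Set.mem_iUnion.2 ⟨k, u, ?_, rfl⟩)
      rwa [inr_mem_conedSet hD, inl_mem_conedSet] at hn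
    · exact h.elim
    · exact h.elim
  refine (hF.union (hF.image Prod.swap)).subset ?_
  rintro ⟨u, v⟩ ⟨⟨-, h | h⟩, hu, hv⟩
  · exact Or.inl ⟨h, fun h' => hv (h'.1 hu)⟩
  · exact Or.inr ⟨(v, u), ⟨h, fun h' => hv (h'.2 hu)⟩, rfl⟩

/-- A finitely generated group with an infinite almost invariant set with infinite complement
splits over a finite subgroup; subgroups under which the set is almost equal to an invariant set are
elliptic. -/
theorem exists_splitting_of_almostInvariant [Group.FG G] [Finite κ]
    (hC : C.Infinite) (hC' : Cᶜ.Infinite) (hinv : ∀ x, {g | ¬ (g ∈ C ↔ g * x ∈ C)}.Finite)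
    (hL : ∀ k, ∃ D : Set G, {g | ¬ (g ∈ C ↔ g ∈ D)}.Finite ∧
      ∀ g, ∀ x ∈ L k, (g * x ∈ D ↔ g ∈ D)) :
    ∃ (W : Type) (T : SimpleGraph W) (ρ : G →* Equiv.Perm W),
      T.IsTree ∧
      (∀ (g : G) (u v : W), T.Adj (ρ g u) (ρ g v) ↔ T.Adj u v) ∧
      (∀ (g : G) (u v : W), T.Adj u v → ¬(ρ g u = v ∧ ρ g v = u)) ∧
      (∀ u v x y : W, T.Adj u v → T.Adj x y →
        ∃ g : G, (ρ g u = x ∧ ρ g v = y) ∨ (ρ g u = y ∧ ρ g v = x)) ∧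
      (∀ u v : W, T.Adj u v → {g : G | ρ g u = u ∧ ρ g v = v}.Finite) ∧
      (¬ ∃ w : W, ∀ g : G, ρ g w = w) ∧
      (∀ k, ∃ w : W, ∀ g ∈ L k, ρ g w = w) := by
  choose D hCD hD using hL
  obtain ⟨S, hS, hSfin⟩ := Group.fg_iff.1 ‹Group.FG G›
  have : Countable G := by
    obtain ⟨α, _, f, hf⟩ := Group.fg_iff_exists_freeGroup_hom_surjective_finite.1 ‹Group.FG G›
    exact hf.countable
  have hess : ∀ E : Set (G ⊕ (Σ k, G ⧸ L k)),
      {g : G | .inl g ∈ E}.Infinite → SimpleGraph.Essential G (.inl 1) E := by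
    intro E hE
    refine hE.mono fun g hg => ?_
    change .inl (g * 1) ∈ E
    rwa [mul_one]
  have hstab : ∀ u v, (conedGraph S L).Adj u v → {g : G | g • u = u ∧ g • v = v}.Finite := by
    intro u v huv
    have key : ∀ {g x : G}, g • (.inl x : G ⊕ (Σ k, G ⧸ L k)) = .inl x → g = 1 :=
      fun h => mul_eq_right.1 (Sum.inl_injective h)
    refine (Set.finite_singleton 1).subset fun g hg => ?_
    rcases exists_eq_inl_of_conedGraph_adj huv with ⟨x, rfl⟩ | ⟨x, rfl⟩
    · exact key hg.1
    · exact key hg.2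
  have horb : ∀ u v, (conedGraph S L).Adj u v →
      u ∈ MulAction.orbit G (.inl 1) ∨ v ∈ MulAction.orbit G (.inl 1) := by
    intro u v huv
    have key : ∀ x : G, .inl x ∈ MulAction.orbit G (.inl 1 : G ⊕ (Σ k, G ⧸ L k)) :=
      fun x => ⟨x, congrArg Sum.inl (mul_one x)⟩
    rcases exists_eq_inl_of_conedGraph_adj huv with ⟨x, rfl⟩ | ⟨x, rfl⟩
    · exact Or.inl (key x)
    · exact Or.inr (key x)
  obtain ⟨W, T, ρ, t1, t2, t3, t4, t5, t6, t7⟩ := SimpleGraph.exists_splitting_of_isCut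
    (o := (.inl 1 : G ⊕ (Σ k, G ⧸ L k))) (C := conedSet L C D) conedGraph_smul
    (conedGraph_connected (L := L) hS) hstab horb
    ⟨finite_outBoundary_conedSet hSfin hD hinv hCD, hess _ hC, hess _ hC'⟩
  refine ⟨W, T, ρ, t1, t2, t3, t4, t5, t6, fun k => ?_⟩
  obtain ⟨w, hw⟩ := t7 (.inr ⟨k, (1 : G)⟩)
  refine ⟨w, fun g hg => hw g ?_⟩
  change Sum.inr (⟨k, ((g * 1 : G) : G ⧸ L k)⟩ : Σ k, G ⧸ L k) = _
  rw [mul_one, (QuotientGroup.eq (s := L k)).2 (by simpa using hg : g⁻¹ * 1 ∈ L k)]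

end ConedGraph

section FiniteExtension

variable {A G : Type*} [Group A] [Group G] (c : A →* G)

/-- Coordinates on a finite extension of `A`. -/
theorem exists_coordinates (hc : Function.Injective c) [c.range.Normal] [c.range.FiniteIndex] :
    ∃ (r : G → A) (q : G → G), (Set.range q).Finite ∧ (∀ g, c (r g) * q g = g) ∧
      (∀ a g, r (c a * g) = a * r g) ∧ ∀ a g, q (c a * g) = q g := by
  have h : ∀ g : G, ∃ a, c a = g * ((g : G ⧸ c.range).out)⁻¹ := by
    intro g
    rw [← MonoidHom.mem_range, ← div_eq_mul_inv, ← QuotientGroup.eq_iff_div_mem]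
    exact (Quotient.out_eq' _).symm
  have hq : ∀ a g, (c a * g : G) = (g : G ⧸ c.range) := by
    intro a g
    rw [QuotientGroup.eq_iff_div_mem]
    exact ⟨a, by simp⟩
  choose r hr using h
  refine ⟨r, fun g => (g : G ⧸ c.range).out, ?_, fun g => by simp [hr], fun a g => hc ?_,
    fun a g => congrArg Quotient.out (hq a g)⟩
  · exact (Set.finite_range fun x : G ⧸ c.range => x.out).subset
      (Set.range_subset_iff.2 fun g => ⟨g, rfl⟩)
  · rw [map_mul, hr, hr, hq, mul_assoc]

theorem fg_of_finiteIndex_range [Group.FG A] [c.range.Normal] [c.range.FiniteIndex]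
    (hc : Function.Injective c) : Group.FG G := by
  obtain ⟨r, q, hq, hrq, -⟩ := exists_coordinates c hc
  obtain ⟨S, hS, hSfin⟩ := Group.fg_iff.1 ‹Group.FG A›
  refine Group.fg_iff.2 ⟨c '' S ∪ Set.range q, ?_, (hSfin.image c).union hq⟩
  rw [eq_top_iff]
  intro g _
  rw [← hrq g]
  refine mul_mem ?_ (Subgroup.subset_closure (Or.inr ⟨g, rfl⟩))
  refine Subgroup.closure_mono Set.subset_union_left ?_
  rw [← MonoidHom.map_closure, hS]
  exact ⟨r g, Subgroup.mem_top _, rfl⟩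

/-- Almost invariant sets extend to finite extensions. -/
theorem exists_almostInvariant_of_finiteIndex {κ : Type*} [c.range.Normal] [c.range.FiniteIndex]
    (hc : Function.Injective c) (K : κ → Subgroup A) {C : Set A} (hC : C.Infinite)
    (hC' : Cᶜ.Infinite) (hinv : ∀ x, {a | ¬ (a ∈ C ↔ a * x ∈ C)}.Finite)
    (hK : ∀ (t : G) (k : κ), ∃ D : Set A, {a | ¬ (a ∈ C ↔ a ∈ D)}.Finite ∧
      ∀ a y, (∃ x ∈ K k, c y = t * c x * t⁻¹) → (a * y ∈ D ↔ a ∈ D)) :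
    ∃ C' : Set G, C'.Infinite ∧ C'ᶜ.Infinite ∧ (∀ x, {g | ¬ (g ∈ C' ↔ g * x ∈ C')}.Finite) ∧
      ∀ k, ∃ D : Set G, {g | ¬ (g ∈ C' ↔ g ∈ D)}.Finite ∧
        ∀ g, ∀ x ∈ (K k).map c, (g * x ∈ D ↔ g ∈ D) := by
  obtain ⟨r, q, hq, hrq, hr, hqc⟩ := exists_coordinates c hc
  have hsurj : Function.Surjective r := fun a => ⟨c (a * (r 1)⁻¹) * 1, by rw [hr]; simp⟩
  have hfin : ∀ F : G → Set A, (∀ t, (F t).Finite) → {g | r g ∈ F (q g)}.Finite := by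
    intro F hF
    refine (hq.biUnion fun t _ => (hF t).image fun a => c a * t).subset fun g hg => ?_
    exact Set.mem_biUnion ⟨g, rfl⟩ ⟨r g, hg, hrq g⟩
  choose D hCD hD using hK
  refine ⟨r ⁻¹' C, hC.preimage (by simp [hsurj.range_eq]), hC'.preimage (by simp [hsurj.range_eq]),
    fun x => ?_, fun k => ⟨{g | r g ∈ D (q g) k}, hfin _ fun t => hCD t k, ?_⟩⟩
  · refine (hfin _ fun t => hinv (r (t * x))).subset fun g hg => ?_
    have : r (g * x) = r g * r (q g * x) := by rw [← hr, ← mul_assoc, hrq]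
    simpa [this] using hg
  · rintro g _ ⟨x, hx, rfl⟩
    obtain ⟨y, hy⟩ := ‹c.range.Normal›.conj_mem (c x) ⟨x, rfl⟩ (q g)
    have h : g * c x = c (r g * y * (r g)⁻¹) * g := by
      have hqg : q g = (c (r g))⁻¹ * g := eq_inv_mul_of_mul_eq (hrq g)
      rw [map_mul, map_mul, hy, hqg, map_inv]
      group
    have h1 : r (g * c x) = r g * y := by rw [h, hr, inv_mul_cancel_right]
    have h2 : q (g * c x) = q g := by rw [h, hqc]
    simp only [Set.mem_ofPred_eq, h1, h2]
    exact hD (q g) k _ y ⟨x, hx, hy⟩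

end FiniteExtension

/-- Relative Stallings' theorem.  Given a free product decomposition
`A = A₁ ∗ ⋯ ∗ Aₙ ∗ B` (with all factors finitely generated, at least two of them
nontrivial) preserved by a monomorphism `φ : H → Out(A)` from a finite group `H`,
the preimage `Ā` of `φ(H)` in `Aut(A)` splits over a finite subgroup in such a way
that each `Aᵢ` (viewed in `Ā` via `A ≅ Inn(A)`) is elliptic:  `Ā` acts without
inversions on a tree with a single orbit of edges, finite edge stabilisers,
no global fixed vertex, and each `Aᵢ` fixes a vertex. -/
theorem relative_stallings
    {A : Type*} [Group A] {n : ℕ} (Ai : Fin n → Subgroup A) (B : Subgroup A)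
    -- `A = A₁ ∗ ⋯ ∗ Aₙ ∗ B` :
    (hiso : Function.Bijective
      (Monoid.CoprodI.lift (fun o : Option (Fin n) => (o.elim B Ai).subtype)))
    -- at least two nontrivial factors :
    (hnontriv : ∃ o₁ o₂ : Option (Fin n), o₁ ≠ o₂ ∧
      o₁.elim B Ai ≠ ⊥ ∧ o₂.elim B Ai ≠ ⊥)
    -- all factors finitely generated :
    (hfgA : ∀ i, Group.FG (Ai i)) (hfgB : Group.FG B)
    -- `φ : H → Out(A)` a monomorphism with finite domain :
    {H : Type*} [Group H] [Finite H] (φ : H →* OutG A)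
    (hφ : Function.Injective φ)
    -- the decomposition is preserved by `H` :
    (hpres : ∀ (h : H) (i : Fin n), ∃ j : Fin n, ∀ ψ : MulAut A,
      toOut A ψ = φ h →
      ∃ x : A, (Ai i).map ψ.toMonoidHom = (Ai j).map (MulAut.conj x).toMonoidHom)
    -- `Ā`, the preimage of `φ(H)` in `Aut(A)` :
    (Abar : Subgroup (MulAut A)) (hAbar : Abar = Subgroup.comap (toOut A) φ.range) :
    ∃ (W : Type) (T : SimpleGraph W) (ρ : Abar →* Equiv.Perm W),
      -- `T` is a tree and `Ā` acts on it by graph automorphisms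
      T.IsTree ∧
      (∀ (g : Abar) (u v : W), T.Adj (ρ g u) (ρ g v) ↔ T.Adj u v) ∧
      -- without inversions
      (∀ (g : Abar) (u v : W), T.Adj u v → ¬(ρ g u = v ∧ ρ g v = u)) ∧
      -- a single orbit of edges
      (∀ u v x y : W, T.Adj u v → T.Adj x y →
        ∃ g : Abar, (ρ g u = x ∧ ρ g v = y) ∨ (ρ g u = y ∧ ρ g v = x)) ∧
      -- finite edge stabilisers
      (∀ u v : W, T.Adj u v → {g : Abar | ρ g u = u ∧ ρ g v = v}.Finite) ∧
      -- no vertex is fixed by all of `Ā` (the splitting is nontrivial)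
      (¬ ∃ w : W, ∀ g : Abar, ρ g w = w) ∧
      -- each `Aᵢ`, viewed inside `Ā` via `A ≅ Inn(A)`, fixes a vertex
      (∀ i : Fin n, ∃ w : W, ∀ g : Abar,
        (∃ a ∈ Ai i, (g : MulAut A) = MulAut.conj a) → ρ g w = w) := by
  
  subst hAbar
  obtain ⟨o₁, o₂, hne, h₁, h₂⟩ := hnontriv
  let M : Option (Fin n) → Subgroup A := fun o => o.elim B Ai
  have hconj : Function.Injective (MulAut.conj (G := A)) :=
    FreeProduct.conj_injective (M := M) hiso hne h₁ h₂
  have hA : Group.FG A := FreeProduct.fg (M := M) hiso.2 fun o => by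
    cases o with
    | none => exact hfgB
    | some i => exact hfgA i
  obtain ⟨C, hC, hC', hinv, hM⟩ := FreeProduct.exists_almostInvariant (M := M) hiso hne h₁ h₂
  have hmem : ∀ a, MulAut.conj a ∈ Subgroup.comap (toOut A) φ.range := fun a =>
    ⟨1, (map_one φ).trans ((QuotientGroup.eq_one_iff (N := Inn A) _).2 ⟨a, rfl⟩).symm⟩
  let c : A →* Subgroup.comap (toOut A) φ.range := MulAut.conj.codRestrict _ hmem
  have hc : Function.Injective c := fun a b h => hconj (congrArg Subtype.val h)
  let f : Subgroup.comap (toOut A) φ.range →* φ.range := (toOut A).subgroupComap φ.range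
  have hker : c.range = f.ker := by
    ext g
    rw [MonoidHom.mem_ker, Subtype.ext_iff]
    change _ ↔ toOut A g = 1
    rw [QuotientGroup.mk'_apply, QuotientGroup.eq_one_iff]
    exact exists_congr fun a => Subtype.ext_iff
  have : Finite φ.range := Set.finite_range φ
  have : c.range.Normal := hker ▸ inferInstance
  have : c.range.FiniteIndex := hker ▸ inferInstance
  have : Group.FG (Subgroup.comap (toOut A) φ.range) := fg_of_finiteIndex_range c hc
  obtain ⟨C', hC1, hC2, hC3, hC4⟩ := exists_almostInvariant_of_finiteIndex c hc Ai hC hC' hinv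
    fun t i => by
      obtain ⟨h, hh⟩ := t.2
      obtain ⟨j, hj⟩ := hpres h i
      obtain ⟨x, hx⟩ := hj t hh.symm
      obtain ⟨D, hD, hD'⟩ := hM (some j)
      refine ⟨{a | a * x ∈ D}, ?_, ?_⟩
      · refine ((hinv x).union (hD.preimage (mul_left_injective x).injOn)).subset fun a ha => ?_
        simp only [Set.mem_union, Set.mem_ofPred_eq, Set.mem_preimage] at ha ⊢
        tauto
      · rintro a y ⟨z, hz, hy⟩
        have hy' : y = (t : MulAut A) z := by
          refine hconj ((congrArg Subtype.val hy).trans ?_)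
          ext b
          change (t : MulAut A) (MulAut.conj z ((t : MulAut A).symm b)) = _
          simp
        obtain ⟨w, hw, hwy⟩ : y ∈ (Ai j).map (MulAut.conj x).toMonoidHom := by
          rw [← hx, hy']
          exact ⟨z, hz, rfl⟩
        have hyx : y * x = x * w := by
          rw [← hwy]
          simp
        change a * y * x ∈ D ↔ a * x ∈ D
        rw [mul_assoc, hyx, ← mul_assoc]
        exact hD' _ w hw
  obtain ⟨W, T, ρ, t1, t2, t3, t4, t5, t6, t7⟩ :=
    exists_splitting_of_almostInvariant hC1 hC2 hC3 hC4
  refine ⟨W, T, ρ, t1, t2, t3, t4, t5, t6, fun i => ?_⟩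
  obtain ⟨w, hw⟩ := t7 i
  refine ⟨w, fun g => ?_⟩
  rintro ⟨a, ha, hg⟩
  exact hw g ⟨a, ha, Subtype.ext hg.symm⟩
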